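/- arXiv:1108.1612 — 3 statements merged into one kernel-verified Lean document; each statement's English description precedes it below -/
import Mathlib

section
/- Let f : ℂP² ⇢ ℂP² be a dominant rational map (given by coprime homogeneous polynomials of degree e) such that the image of every line lies in a conic (a plane curve of degree at most 2). Then e ≤ 2. -/
open MvPolynomial in
/-- The restriction of a polynomial to the parametrized line `t ↦ x + t v`. -/
noncomputable def restrictLine {σ : Type*} (x v : σ → ℂ) :
    MvPolynomial σ ℂ →ₐ[ℂ] Polynomial ℂ :=
  aeval fun k => Polynomial.C (x k) + Polynomial.X * Polynomial.C (v k)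

theorem eval_restrictLine {σ : Type*} (x v : σ → ℂ) (F : MvPolynomial σ ℂ) (t : ℂ) :
    (restrictLine x v F).eval t = MvPolynomial.eval (x + t • v) F := by
  have h : (Polynomial.evalRingHom t).comp (restrictLine x v).toRingHom =
      MvPolynomial.eval (x + t • v) := by
    apply MvPolynomial.ringHom_ext
    · intro r
      simp [restrictLine, Polynomial.algebraMap_eq]
    · intro i
      simp [restrictLine, mul_comm t]
  exact congrArg (fun f => f F) h

theorem derivative_restrictLine {σ : Type*} [Fintype σ] (x v : σ → ℂ) (F : MvPolynomial σ ℂ) :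
    Polynomial.derivative (restrictLine x v F) =
      ∑ k, Polynomial.C (v k) * restrictLine x v (MvPolynomial.pderiv k F) := by
  classical
  induction F using MvPolynomial.induction_on with
  | C a => simp [restrictLine, Polynomial.algebraMap_eq]
  | add p q hp hq => simp [hp, hq, mul_add, Finset.sum_add_distrib]
  | mul_X p i hp =>
    have hX : restrictLine x v (MvPolynomial.X i) =
        Polynomial.C (x i) + Polynomial.X * Polynomial.C (v i) := by
      simp [restrictLine]
    simp only [map_mul, Polynomial.derivative_mul, hp, Derivation.leibniz, smul_eq_mul, map_add,
      mul_add, Finset.sum_add_distrib, MvPolynomial.pderiv_X, Pi.single_apply]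
    rw [hX, add_comm]
    congr 1
    · rw [Finset.sum_eq_single i]
      · simp
        ring
      · intro b _ hb
        simp [hb.symm]
      · simp
    · rw [Finset.sum_mul]
      exact Finset.sum_congr rfl fun k _ => by ring

theorem coeff_one_restrictLine {σ : Type*} [Fintype σ] (x v : σ → ℂ) (F : MvPolynomial σ ℂ) :
    (restrictLine x v F).coeff 1 = ∑ k, v k * MvPolynomial.eval x (MvPolynomial.pderiv k F) := by
  have h := congrArg (Polynomial.eval 0) (derivative_restrictLine x v F)
  rw [← Polynomial.coeff_zero_eq_eval_zero, Polynomial.coeff_derivative] at h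
  simpa [Polynomial.eval_finsetSum, eval_restrictLine] using h

theorem restrictLine_monomial_one {σ : Type*} (x v : σ → ℂ) (d : σ →₀ ℕ) :
    (restrictLine x v (MvPolynomial.monomial d 1)).natDegree ≤ d.degree ∧
      (restrictLine x v (MvPolynomial.monomial d 1)).coeff d.degree =
        MvPolynomial.eval v (MvPolynomial.monomial d 1) := by
  induction d using Finsupp.induction_linear with
  | zero => simp [restrictLine]
  | add a b ha hb =>
    have h : (MvPolynomial.monomial (a + b) (1 : ℂ)) =
        MvPolynomial.monomial a 1 * MvPolynomial.monomial b 1 := by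
      simp [MvPolynomial.monomial_mul]
    rw [h, map_mul, map_mul, map_add, ← ha.2, ← hb.2]
    exact ⟨Polynomial.natDegree_mul_le_of_le ha.1 hb.1,
      Polynomial.coeff_mul_add_eq_of_natDegree_le ha.1 hb.1⟩
  | single i n =>
    have h : (MvPolynomial.monomial (Finsupp.single i n) (1 : ℂ)) = MvPolynomial.X i ^ n := by
      rw [MvPolynomial.X_pow_eq_monomial]
    have hX : restrictLine x v (MvPolynomial.X i) =
        Polynomial.C (x i) + Polynomial.X * Polynomial.C (v i) := by
      simp [restrictLine]
    have hdeg : (Polynomial.C (x i) + Polynomial.X * Polynomial.C (v i)).natDegree ≤ 1 := by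
      compute_degree
    rw [h, map_pow, map_pow, hX]
    refine ⟨by simpa using Polynomial.natDegree_pow_le_of_le n hdeg, ?_⟩
    have := Polynomial.coeff_pow_of_natDegree_le (m := n) hdeg
    simpa [Polynomial.coeff_C] using this

theorem restrictLine_of_isHomogeneous {σ : Type*} (x v : σ → ℂ) {F : MvPolynomial σ ℂ} {e : ℕ}
    (hF : F.IsHomogeneous e) :
    (restrictLine x v F).natDegree ≤ e ∧
      (restrictLine x v F).coeff e = MvPolynomial.eval v F := by
  have hmon : ∀ d ∈ F.support, MvPolynomial.monomial d (F.coeff d) =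
      MvPolynomial.C (F.coeff d) * MvPolynomial.monomial d 1 := by
    intro d _
    simp [MvPolynomial.C_mul_monomial]
  have hC : ∀ a : ℂ, restrictLine x v (MvPolynomial.C a) = Polynomial.C a := by
    intro a
    simp [restrictLine, Polynomial.algebraMap_eq]
  have hdeg : ∀ d ∈ F.support, d.degree = e := fun d hd => by
    by_contra h
    exact (MvPolynomial.mem_support_iff.1 hd) (hF.coeff_eq_zero h)
  have key := F.as_sum
  rw [Finset.sum_congr rfl hmon] at key
  constructor
  · rw [key, map_sum]
    refine Polynomial.natDegree_sum_le_of_forall_le _ _ fun d hd => ?_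
    rw [map_mul, hC]
    refine (Polynomial.natDegree_C_mul_le _ _).trans ?_
    rw [← hdeg d hd]
    exact (restrictLine_monomial_one x v d).1
  · rw [key, map_sum, map_sum, Polynomial.finsetSum_coeff]
    refine Finset.sum_congr rfl fun d hd => ?_
    rw [map_mul, hC, Polynomial.coeff_C_mul, map_mul, ← (restrictLine_monomial_one x v d).2,
      hdeg d hd, MvPolynomial.eval_C]

theorem MvPolynomial.IsHomogeneous.eval_smul_eq {σ : Type*} {F : MvPolynomial σ ℂ} {e : ℕ}
    (hF : F.IsHomogeneous e) (c : ℂ) (x : σ → ℂ) :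
    eval (c • x) F = c ^ e * eval x F := by
  rw [eval_eq, eval_eq, Finset.mul_sum]
  refine Finset.sum_congr rfl fun d hd => ?_
  have h : d.degree = e := by
    by_contra h
    exact (mem_support_iff.1 hd) (hF.coeff_eq_zero h)
  simp only [Pi.smul_apply, smul_eq_mul, mul_pow, Finset.prod_mul_distrib,
    Finset.prod_pow_eq_pow_sum]
  rw [← h, Finsupp.degree_apply]
  ring

theorem Polynomial.eq_zero_of_mul_derivative_eq {p h : Polynomial ℂ} (hp : p.eval 0 ≠ 0)
    (hh : h.eval 0 = 0) (H : p * derivative h = h * derivative p) : h = 0 := by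
  by_contra h0
  have hroot : h.IsRoot 0 := hh
  have hp0 : p ≠ 0 := by
    rintro rfl
    simp at hp
  have hm := derivative_rootMultiplicity_of_root hroot
  have hpos : 0 < h.rootMultiplicity 0 := (rootMultiplicity_pos h0).2 hroot
  have hdvd : (X - C 0) ^ h.rootMultiplicity 0 ∣ p * derivative h :=
    H ▸ (pow_rootMultiplicity_dvd h 0).mul_right _
  have hd0 : derivative h ≠ 0 := by
    intro hd
    obtain ⟨a, ha⟩ : ∃ a, h = C a := ⟨_, eq_C_of_derivative_eq_zero hd⟩
    rw [ha] at hh h0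
    simp at hh h0
    exact h0 hh
  have hle := (le_rootMultiplicity_iff (mul_ne_zero hp0 hd0)).2 hdvd
  rw [rootMultiplicity_mul (mul_ne_zero hp0 hd0), hm, rootMultiplicity_eq_zero hp] at hle
  omega

theorem MvPolynomial.exists_linear_relation {σ : Type*} [Fintype σ] {F G : MvPolynomial σ ℂ}
    (H : ∀ k, F * pderiv k G = G * pderiv k F) :
    ∃ a b : ℂ, (a ≠ 0 ∨ b ≠ 0) ∧ C a * F + C b * G = 0 := by
  by_cases hF : F = 0
  · exact ⟨1, 0, by simp, by simp [hF]⟩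
  obtain ⟨x, hx⟩ : ∃ x, eval x F ≠ 0 := by
    by_contra! h
    exact hF (MvPolynomial.funext fun x => by simp [h x])
  refine ⟨-eval x G, eval x F, Or.inr hx, MvPolynomial.funext fun y => ?_⟩
  set K := C (-eval x G) * F + C (eval x F) * G with hK
  have hKF : ∀ k, F * pderiv k K = K * pderiv k F := fun k => by
    simp only [hK, map_add, Derivation.leibniz, pderiv_C, smul_eq_mul]
    linear_combination (C (eval x F)) * H k
  have h := Polynomial.eq_zero_of_mul_derivative_eq (p := restrictLine x (y - x) F)
    (h := restrictLine x (y - x) K) (by simpa [eval_restrictLine] using hx)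
    (by simp [eval_restrictLine, hK, mul_comm]) (by
      rw [derivative_restrictLine, derivative_restrictLine, Finset.mul_sum, Finset.mul_sum]
      refine Finset.sum_congr rfl fun k _ => ?_
      have := congrArg (restrictLine x (y - x)) (hKF k)
      simp only [map_mul] at this
      linear_combination (Polynomial.C ((y - x) k)) * this)
  have := eval_restrictLine x (y - x) K 1
  rw [h] at this
  simpa using this.symm

/-- Polynomials over a unique factorization domain without a common factor satisfy a Bézout
relation whose right-hand side is a nonzero constant. -/
theorem Polynomial.exists_sum_mul_eq_C {ι R : Type*} [Fintype ι] [CommRing R] [IsDomain R]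
    [UniqueFactorizationMonoid R] (f : ι → Polynomial R) (hne : ∃ i, f i ≠ 0)
    (hcop : ∀ D, (∀ i, D ∣ f i) → IsUnit D) :
    ∃ (r : R) (A : ι → Polynomial R), r ≠ 0 ∧ ∑ i, A i * f i = C r := by
  classical
  let _ : NormalizedGCDMonoid R := Nonempty.some inferInstance
  set φ := mapRingHom (algebraMap R (FractionRing R))
  have hφ : Function.Injective φ := map_injective _ (IsFractionRing.injective R (FractionRing R))
  obtain ⟨d, hd⟩ := (IsPrincipalIdealRing.principal
    (Ideal.span (Set.range fun i => φ (f i)))).principal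
  rw [Ideal.submodule_span_eq] at hd
  have hdf : ∀ i, d ∣ φ (f i) := fun i => by
    rw [← Ideal.mem_span_singleton, ← hd]
    exact Ideal.subset_span ⟨i, rfl⟩
  have hd0 : d ≠ 0 := by
    rintro rfl
    obtain ⟨i, hi⟩ := hne
    exact hi ((map_eq_zero_iff φ hφ).1 (zero_dvd_iff.1 (hdf i)))
  have hdu : IsUnit d := by
    refine isUnit_or_eq_zero_of_isUnit_integerNormalization_primPart (R := R) hd0
      (hcop _ fun i => ?_)
    refine (isPrimitive_primPart _).dvd_of_fraction_map_dvd_fraction_map (K := FractionRing R)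
      (dvd_trans ?_ (hdf i))
    obtain ⟨c, c0, hc⟩ := IsLocalization.integerNormalization_spec (nonZeroDivisors R) d
    rw [Algebra.smul_def, algebraMap_apply] at hc
    have hcK : algebraMap R (FractionRing R) c ≠ 0 :=
      IsFractionRing.to_map_ne_zero_of_mem_nonZeroDivisors c0
    refine ((isUnit_C.2 hcK.isUnit).dvd_mul_left).1 ?_
    rw [← hc]
    exact Polynomial.map_dvd _ (primPart_dvd _)
  have h1 : (1 : Polynomial (FractionRing R)) ∈ Ideal.span (Set.range fun i => φ (f i)) := by
    rw [hd, Ideal.span_singleton_eq_top.2 hdu]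
    trivial
  obtain ⟨c, hc⟩ := (Ideal.mem_span_range_iff_exists_fun).1 h1
  let _ : Algebra (Polynomial R) (Polynomial (FractionRing R)) := φ.toAlgebra
  have hloc : IsLocalization ((nonZeroDivisors R).map (C : R →+* Polynomial R))
      (Polynomial (FractionRing R)) :=
    Polynomial.isLocalization _ _
  obtain ⟨⟨b, hb⟩, hbc⟩ := IsLocalization.exist_integer_multiples_of_finite
    ((nonZeroDivisors R).map (C : R →+* Polynomial R)) c
  obtain ⟨r, hr, rfl⟩ := hb
  choose A hA using hbc
  refine ⟨r, A, nonZeroDivisors.ne_zero hr, hφ ?_⟩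
  rw [map_sum]
  have : ∀ i, φ (A i * f i) = φ (C r) * (c i * φ (f i)) := by
    intro i
    have h := hA i
    rw [Algebra.smul_def] at h
    rw [map_mul, ← mul_assoc]
    exact congrArg (· * φ (f i)) h
  rw [Finset.sum_congr rfl fun i _ => this i, ← Finset.mul_sum, hc, mul_one]

open MvPolynomial in
/-- The substitution `X ↦ X + s u`, where `s` is a new polynomial variable. -/
noncomputable def shiftHom {σ : Type*} (u : σ → ℂ) :
    MvPolynomial σ ℂ →+* Polynomial (MvPolynomial σ ℂ) :=
  eval₂Hom (Polynomial.C.comp C) fun k =>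
    Polynomial.C (X k) + Polynomial.X * Polynomial.C (C (u k))

theorem eval₂_shiftHom_shiftHom {σ : Type*} (u : σ → ℂ) (g : MvPolynomial σ ℂ) :
    Polynomial.eval₂RingHom (shiftHom (-u)) Polynomial.X (shiftHom u g) = Polynomial.C g := by
  have h : (Polynomial.eval₂RingHom (shiftHom (-u)) Polynomial.X).comp (shiftHom u) =
      Polynomial.C := by
    apply MvPolynomial.ringHom_ext
    · intro r
      simp [shiftHom]
    · intro k
      simp [shiftHom]
      ring
  exact congrArg (fun f => f g) h

theorem eval₂_shiftHom_eval₂_shiftHom {σ : Type*} (u : σ → ℂ)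
    (D : Polynomial (MvPolynomial σ ℂ)) :
    Polynomial.eval₂RingHom (shiftHom u) Polynomial.X
      (Polynomial.eval₂RingHom (shiftHom (-u)) Polynomial.X D) = D := by
  have h : (Polynomial.eval₂RingHom (shiftHom u) Polynomial.X).comp
      (Polynomial.eval₂RingHom (shiftHom (-u)) Polynomial.X) = RingHom.id _ := by
    apply Polynomial.ringHom_ext'
    · refine RingHom.ext fun g => ?_
      have := eval₂_shiftHom_shiftHom (-u) g
      rw [neg_neg] at this
      simpa using this
    · simp
  exact congrArg (fun f => f D) h

/-- Elimination: if the polynomials `G i` have no common factor, then a generic line through `x`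
contains no common zero of the `G i`, except possibly `x` itself. -/
theorem MvPolynomial.exists_eliminant {ι σ : Type*} [Fintype ι] [Finite σ]
    (G : ι → MvPolynomial σ ℂ) (hne : ∃ i, G i ≠ 0)
    (hcop : ∀ D : MvPolynomial σ ℂ, (∀ i, D ∣ G i) → IsUnit D) (x : σ → ℂ) :
    ∃ r : MvPolynomial σ ℂ, r ≠ 0 ∧ ∀ v, eval v r ≠ 0 →
      ∀ s : ℂ, ∃ i, eval (s • x + v) (G i) ≠ 0 := by
  obtain ⟨i₀, hi₀⟩ := hne
  have hunit : ∀ D, (∀ i, D ∣ shiftHom x (G i)) → IsUnit D := by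
    intro D hD
    rw [← eval₂_shiftHom_eval₂_shiftHom x D]
    refine IsUnit.map _ ?_
    set E := Polynomial.eval₂RingHom (shiftHom (-x)) Polynomial.X D
    have hE : ∀ i, E ∣ Polynomial.C (G i) := fun i =>
      eval₂_shiftHom_shiftHom x (G i) ▸ map_dvd _ (hD i)
    have hdeg : E.natDegree = 0 := by
      simpa using Polynomial.natDegree_le_of_dvd (hE i₀) (by simpa using hi₀)
    obtain ⟨d, hd⟩ := Polynomial.natDegree_eq_zero.1 hdeg
    rw [← hd] at hE ⊢
    refine Polynomial.isUnit_C.2 (hcop d fun i => ?_)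
    obtain ⟨q, hq⟩ := hE i
    exact ⟨q.coeff 0, by simpa using congrArg (fun f => Polynomial.coeff f 0) hq⟩
  have hne : shiftHom x (G i₀) ≠ 0 := by
    intro h
    have := eval₂_shiftHom_shiftHom x (G i₀)
    rw [h, map_zero] at this
    exact hi₀ (Polynomial.C_eq_zero.1 this.symm)
  obtain ⟨r, A, hr, hsum⟩ := Polynomial.exists_sum_mul_eq_C (fun i => shiftHom x (G i))
    ⟨i₀, hne⟩ hunit
  refine ⟨r, hr, fun v hv s => ?_⟩
  by_contra! h
  have hev : ∀ g, Polynomial.eval₂RingHom (eval v) s (shiftHom x g) = eval (s • x + v) g := by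
    intro g
    have h : (Polynomial.eval₂RingHom (eval v) s).comp (shiftHom x) = eval (s • x + v) := by
      apply ringHom_ext
      · intro r
        simp [shiftHom]
      · intro k
        simp [shiftHom, add_comm, mul_comm s]
    exact congrArg (fun f => f g) h
  have := congrArg (Polynomial.eval₂RingHom (eval v) s) hsum
  simp only [map_sum, map_mul, hev, h, mul_zero, Finset.sum_const_zero] at this
  exact hv (by simpa using this.symm)

theorem MvPolynomial.homogeneousComponent_mul_of_totalDegree_le {σ R : Type*} [CommSemiring R]
    {p q : MvPolynomial σ R} {m n : ℕ} (hp : p.totalDegree ≤ m) (hq : q.totalDegree ≤ n) :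
    homogeneousComponent (m + n) (p * q) =
      homogeneousComponent m p * homogeneousComponent n q := by
  classical
  ext d
  have hom := (homogeneousComponent_isHomogeneous m p).mul (homogeneousComponent_isHomogeneous n q)
  rw [coeff_homogeneousComponent]
  split_ifs with hd
  · rw [coeff_mul, coeff_mul]
    refine Finset.sum_congr rfl fun ab hab => ?_
    have hsum : ab.1.degree + ab.2.degree = m + n := by
      rw [← map_add, Finset.HasAntidiagonal.mem_antidiagonal.1 hab, hd]
    rw [coeff_homogeneousComponent, coeff_homogeneousComponent]
    have h1 : m < ab.1.degree → p.coeff ab.1 = 0 := fun h =>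
      coeff_eq_zero_of_totalDegree_lt (hp.trans_lt h)
    have h2 : n < ab.2.degree → q.coeff ab.2 = 0 := fun h =>
      coeff_eq_zero_of_totalDegree_lt (hq.trans_lt h)
    rcases lt_trichotomy ab.1.degree m with h | h | h
    · rw [h2 (by omega)]
      simp
    · rw [if_pos h, if_pos (by omega)]
    · rw [h1 h]
      simp
  · exact (hom.coeff_eq_zero hd).symm

/-- The leading form of a divisor of a homogeneous polynomial is again a divisor. -/
theorem MvPolynomial.IsHomogeneous.leadingForm_dvd {σ R : Type*} [CommRing R] [IsDomain R]
    {D G : MvPolynomial σ R} {e : ℕ} (hG : G.IsHomogeneous e) (hG0 : G ≠ 0) (h : D ∣ G) :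
    homogeneousComponent D.totalDegree D ∣ G := by
  obtain ⟨E, rfl⟩ := h
  refine ⟨homogeneousComponent E.totalDegree E, ?_⟩
  rw [← homogeneousComponent_mul_of_totalDegree_le le_rfl le_rfl,
    ← totalDegree_mul_of_isDomain (left_ne_zero_of_mul hG0) (right_ne_zero_of_mul hG0),
    hG.totalDegree hG0]
  exact (homogeneousComponent_eq_self hG).symm

theorem MvPolynomial.IsHomogeneous.exists_eval_eq_sum {σ : Type*} [Fintype σ]
    {c : MvPolynomial σ ℂ} (hc : c.IsHomogeneous 2) :
    ∃ M : σ → σ → ℂ, ∀ y, eval y c = ∑ i, ∑ j, M i j * y i * y j := by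
  have h0 : ∀ i j, ∃ m : ℂ, pderiv j (pderiv i c) = C m := fun i j => by
    have := (hc.pderiv (i := i)).pderiv (i := j)
    rw [← totalDegree_zero_iff_isHomogeneous, totalDegree_eq_zero_iff_eq_C] at this
    exact ⟨_, this⟩
  choose m hm using h0
  refine ⟨fun i j => m i j / 2, fun y => ?_⟩
  have h1 : ∀ i, eval y (pderiv i c) = ∑ j, y j * m i j := fun i => by
    have := congrArg (eval y) (hc.pderiv (i := i)).sum_X_mul_pderiv
    simpa [hm] using this.symm
  have h2 := congrArg (eval y) hc.sum_X_mul_pderiv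
  simp only [map_sum, map_mul, eval_X, h1, nsmul_eq_mul] at h2
  rw [← mul_right_inj' (two_ne_zero (α := ℂ))]
  rw [Nat.cast_ofNat, map_ofNat] at h2
  rw [← h2, Finset.mul_sum]
  refine Finset.sum_congr rfl fun i _ => ?_
  rw [Finset.mul_sum, Finset.mul_sum]
  exact Finset.sum_congr rfl fun j _ => by ring

open Polynomial in
theorem le_one_of_mul_add_X_mul_eq_zero {n : ℕ} {h a b : ℂ[X]} {k₀ k₁ k₂ : ℂ}
    (h0 : h.eval 0 ≠ 0) (hdeg : h.natDegree ≤ n + 1) (hb : b.natDegree ≤ n)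
    (hn : a.coeff n ≠ 0 ∨ b.coeff n ≠ 0) (hab : IsCoprime a b)
    (H : h * a + X * (C k₀ * a ^ 2 + C k₁ * (a * b) + C k₂ * b ^ 2) = 0) : n ≤ 1 := by
  by_contra! hn2
  rcases eq_or_ne a 0 with rfl | ha0
  · have hu := natDegree_eq_zero_of_isUnit (isCoprime_zero_left.1 hab)
    have := hn.resolve_left (by simp)
    exact this (coeff_eq_zero_of_natDegree_lt (by omega))
  have hk2 : k₂ ≠ 0 := by
    rintro rfl
    have : a * (h + X * (C k₀ * a + C k₁ * b)) = 0 := by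
      rw [← H, C_0]
      ring
    have := congrArg (eval 0) ((mul_eq_zero.1 this).resolve_left ha0)
    simp at this
    exact h0 this
  have hdvd : a ∣ C k₂ * X * b ^ 2 :=
    ⟨-(h + X * (C k₀ * a + C k₁ * b)), by linear_combination H⟩
  have hdvdX : a ∣ C k₂ * X := hab.pow_right.dvd_of_dvd_mul_right hdvd
  have ha1 : a.natDegree ≤ 1 := by
    have := natDegree_le_of_dvd hdvdX (by simp [hk2])
    rwa [natDegree_C_mul_X _ hk2] at this
  have hbn : b.coeff n ≠ 0 := hn.resolve_left
    (by simp [coeff_eq_zero_of_natDegree_lt (ha1.trans_lt hn2)])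
  have hbd : b.natDegree = n := le_antisymm hb (le_natDegree_of_ne_zero hbn)
  have hb0 : b ≠ 0 := by
    rintro rfl
    simp at hbn
  have e1 : (C k₂ * X * b ^ 2).natDegree = 2 * n + 1 := by
    rw [natDegree_mul (by simp [hk2]) (pow_ne_zero _ hb0), natDegree_C_mul_X _ hk2,
      natDegree_pow, hbd]
    ring
  have e2 : C k₂ * X * b ^ 2 = -(h * a + X * (C k₀ * a ^ 2 + C k₁ * (a * b))) := by
    linear_combination H
  have e3 : (-(h * a + X * (C k₀ * a ^ 2 + C k₁ * (a * b)))).natDegree ≤ n + 2 := by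
    rw [natDegree_neg]
    refine natDegree_add_le_of_degree_le
      ((natDegree_mul_le_of_le hdeg ha1).trans (by omega)) ?_
    refine (natDegree_mul_le_of_le (natDegree_X_le) (n := n + 1) ?_).trans (by omega)
    refine natDegree_add_le_of_degree_le ?_ ?_
    · exact (natDegree_C_mul_le _ _).trans ((natDegree_pow_le_of_le 2 ha1).trans (by omega))
    · exact (natDegree_C_mul_le _ _).trans ((natDegree_mul_le_of_le ha1 hb).trans (by omega))
  rw [← e2, e1] at e3
  omega

open Polynomial in
theorem eq_zero_of_quadratic_relation {n : ℕ} {a b : ℂ[X]} {k₀ k₁ k₂ : ℂ}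
    (hn : a.coeff n ≠ 0 ∨ b.coeff n ≠ 0) (hab : IsCoprime a b)
    (hk : k₀ ≠ 0 ∨ k₁ ≠ 0 ∨ k₂ ≠ 0)
    (H : C k₀ * a ^ 2 + C k₁ * (a * b) + C k₂ * b ^ 2 = 0) : n = 0 := by
  have aux : ∀ {a b : ℂ[X]} {k₀ k₂ : ℂ}, IsCoprime a b → k₀ ≠ 0 →
      C k₀ * a ^ 2 + C k₁ * (a * b) + C k₂ * b ^ 2 = 0 → a.natDegree = 0 ∧ b.natDegree = 0 := by
    intro a b k₀ k₂ hab hk H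
    have hdvd : b ∣ C k₀ * a ^ 2 := ⟨-(C k₁ * a + C k₂ * b), by linear_combination H⟩
    have hb : IsUnit b :=
      isUnit_of_dvd_unit (hab.symm.pow_right.dvd_of_dvd_mul_right hdvd) (isUnit_C.2 hk.isUnit)
    have hb0 := natDegree_eq_zero_of_isUnit hb
    refine ⟨?_, hb0⟩
    have e1 : (C k₀ * a ^ 2).natDegree = 2 * a.natDegree := by
      rw [natDegree_C_mul hk, natDegree_pow]
    have e2 : C k₀ * a ^ 2 = -(C k₁ * (a * b) + C k₂ * b ^ 2) := by linear_combination H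
    have e3 : (-(C k₁ * (a * b) + C k₂ * b ^ 2)).natDegree ≤ a.natDegree := by
      rw [natDegree_neg]
      refine natDegree_add_le_of_degree_le ?_ ?_
      · exact (natDegree_C_mul_le _ _).trans
          ((natDegree_mul_le_of_le le_rfl hb0.le).trans (by omega))
      · exact (natDegree_C_mul_le _ _).trans ((natDegree_pow_le_of_le 2 hb0.le).trans (by omega))
    rw [← e2, e1] at e3
    omega
  have hdeg : a.natDegree = 0 ∧ b.natDegree = 0 → n = 0 := by
    rintro ⟨ha, hb⟩
    rcases hn with h | h
    · have := le_natDegree_of_ne_zero h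
      omega
    · have := le_natDegree_of_ne_zero h
      omega
  by_cases h0 : k₀ = 0
  · by_cases h2 : k₂ = 0
    · subst h0 h2
      have hk1 : k₁ ≠ 0 := by simpa using hk
      have : a * b = 0 := by simpa [hk1] using H
      rcases mul_eq_zero.1 this with rfl | rfl
      · exact hdeg ⟨natDegree_zero, natDegree_eq_zero_of_isUnit (isCoprime_zero_left.1 hab)⟩
      · exact hdeg ⟨natDegree_eq_zero_of_isUnit (isCoprime_zero_right.1 hab), natDegree_zero⟩
    · exact hdeg (aux (k₂ := k₀) hab.symm h2 (by linear_combination H)).symm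
  · exact hdeg (aux hab h0 H)

open Polynomial in
theorem le_one_of_conic_relation {n : ℕ} {h a b : ℂ[X]} {k₀ k₁ k₂ k₃ k₄ k₅ : ℂ}
    (h0 : h.eval 0 ≠ 0) (hdeg : h.natDegree ≤ n + 1) (ha : a.natDegree ≤ n)
    (hb : b.natDegree ≤ n) (hn : a.coeff n ≠ 0 ∨ b.coeff n ≠ 0) (hab : IsCoprime a b)
    (hk : ¬ (k₀ = 0 ∧ k₁ = 0 ∧ k₂ = 0 ∧ k₃ = 0 ∧ k₄ = 0 ∧ k₅ = 0))
    (H : C k₀ * h ^ 2 + C k₁ * (h * (X * a)) + C k₂ * (h * (X * b)) + C k₃ * (X * a) ^ 2 +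
      C k₄ * ((X * a) * (X * b)) + C k₅ * (X * b) ^ 2 = 0) : n ≤ 1 := by
  have hk0 : k₀ = 0 := by
    have := congrArg (eval 0) H
    simpa [h0] using this
  subst hk0
  have H' : h * (C k₁ * a + C k₂ * b) + X * (C k₃ * a ^ 2 + C k₄ * (a * b) + C k₅ * b ^ 2) = 0 := by
    refine (mul_eq_zero.1 (?_ : X * _ = 0)).resolve_left X_ne_zero
    rw [← H, C_0]
    ring
  have aux : ∀ {a b : ℂ[X]} {k₁ k₂ k₃ k₅ : ℂ}, b.natDegree ≤ n →
      (a.coeff n ≠ 0 ∨ b.coeff n ≠ 0) → IsCoprime a b → k₁ ≠ 0 →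
      h * (C k₁ * a + C k₂ * b) + X * (C k₃ * a ^ 2 + C k₄ * (a * b) + C k₅ * b ^ 2) = 0 →
      n ≤ 1 := by
    intro a b k₁ k₂ k₃ k₅ hb hn hab hk H
    have hC : C k₁⁻¹ * C k₁ = 1 := by
      rw [← C_mul, inv_mul_cancel₀ hk, C_1]
    have hcop : IsCoprime (C k₁ * a + C k₂ * b) b :=
      IsCoprime.add_mul_right_left
        ((isCoprime_mul_unit_left_left (isUnit_C.2 hk.isUnit) a b).2 hab) (C k₂)
    refine le_one_of_mul_add_X_mul_eq_zero (k₀ := k₃ * k₁⁻¹ ^ 2)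
      (k₁ := k₄ * k₁⁻¹ - 2 * k₃ * k₂ * k₁⁻¹ ^ 2)
      (k₂ := k₅ - k₄ * k₂ * k₁⁻¹ + k₃ * k₂ ^ 2 * k₁⁻¹ ^ 2) h0 hdeg hb ?_ hcop ?_
    · by_cases hbn : b.coeff n = 0
      · left
        simpa [hbn, hk] using hn
      · exact Or.inr hbn
    · have ea : a = C k₁⁻¹ * (C k₁ * a + C k₂ * b) - C k₁⁻¹ * C k₂ * b := by
        linear_combination (-a) * hC
      set A := C k₁ * a + C k₂ * b
      rw [← H, ea]
      simp only [C_mul, C_add, C_sub, C_pow, C_ofNat]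
      ring
  by_cases h1 : k₁ = 0
  · by_cases h2 : k₂ = 0
    · subst h1 h2
      have : C k₃ * a ^ 2 + C k₄ * (a * b) + C k₅ * b ^ 2 = 0 := by simpa using H'
      have := eq_zero_of_quadratic_relation hn hab (by tauto) this
      omega
    · exact aux (k₂ := k₁) (k₃ := k₅) (k₅ := k₃) ha hn.symm hab.symm h2
        (by linear_combination H')
  · exact aux hb hn hab h1 H'

open MvPolynomial in
theorem exists_linear_form (x v : Fin 3 → ℂ) :
    ∃ ℓ : MvPolynomial (Fin 3) ℂ, ℓ ≠ 0 ∧ ℓ.IsHomogeneous 1 ∧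
      ∀ s t : ℂ, eval (s • x + t • v) ℓ = 0 := by
  obtain ⟨w, hw, hw0⟩ := Matrix.exists_mulVec_eq_zero_iff (M := Matrix.of ![x, v, 0]) |>.2
    (Matrix.det_eq_zero_of_row_eq_zero 2 (by simp))
  have hx := congrFun hw0 0
  have hv := congrFun hw0 1
  simp only [Matrix.mulVec, dotProduct, Fin.sum_univ_three, Matrix.of_apply, Matrix.cons_val_zero,
    Matrix.cons_val_one, Pi.zero_apply] at hx hv
  have heval : ∀ y, eval y (∑ i, C (w i) * X i : MvPolynomial (Fin 3) ℂ) = ∑ i, w i * y i := by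
    simp
  refine ⟨∑ i, C (w i) * X i, ?_, ?_, fun s t => ?_⟩
  · intro h
    apply hw
    funext i
    have := heval (Pi.single i 1)
    rw [h] at this
    simpa [Pi.single_apply] using this.symm
  · exact IsHomogeneous.sum _ _ _ fun i _ => isHomogeneous_C_mul_X _ _
  · rw [heval, Fin.sum_univ_three]
    simp only [Pi.add_apply, Pi.smul_apply, smul_eq_mul]
    linear_combination s * hx + t * hv

open MvPolynomial in
/-- The degree bound in coordinates adapted to a point `x` mapped to `(1 : 0 : 0)` whose fibre is
finite and at which the map is not too degenerate. -/
theorem degree_le_two_of_adapted {e : ℕ} {F : Fin 3 → MvPolynomial (Fin 3) ℂ}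
    (hhom : ∀ i, (F i).IsHomogeneous e) {x : Fin 3 → ℂ} (h0 : eval x (F 0) ≠ 0)
    (h1 : eval x (F 1) = 0) (h2 : eval x (F 2) = 0)
    (hF : F 1 ≠ 0) (hcop : ∀ D, D ∣ F 1 → D ∣ F 2 → IsUnit D)
    (hder : ∃ k, eval x (pderiv k (F 1)) ≠ 0 ∨ eval x (pderiv k (F 2)) ≠ 0)
    (hconic : ∀ v : Fin 3 → ℂ, ∃ c : MvPolynomial (Fin 3) ℂ, c ≠ 0 ∧ c.IsHomogeneous 2 ∧
      ∀ s t : ℂ, eval (fun i => eval (s • x + t • v) (F i)) c = 0) : e ≤ 2 := by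
  obtain _ | n := e
  · omega
  obtain ⟨r, hr, hrv⟩ := exists_eliminant ![F 1, F 2] ⟨0, hF⟩
    (fun D hD => hcop D (hD 0) (hD 1)) x
  obtain ⟨v, hv, hdv⟩ : ∃ v, eval v r ≠ 0 ∧
      ((restrictLine x v (F 1)).coeff 1 ≠ 0 ∨ (restrictLine x v (F 2)).coeff 1 ≠ 0) := by
    have aux : ∀ G : MvPolynomial (Fin 3) ℂ, (∃ k, eval x (pderiv k G) ≠ 0) →
        ∃ v, eval v r ≠ 0 ∧ (restrictLine x v G).coeff 1 ≠ 0 := by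
      rintro G ⟨k, hk⟩
      let d : MvPolynomial (Fin 3) ℂ := ∑ i, X i * C (eval x (pderiv i G))
      have hd : ∀ v, eval v d = (restrictLine x v G).coeff 1 := by
        intro v
        simp [d, coeff_one_restrictLine]
      have hd0 : d ≠ 0 := by
        intro h
        have := hd (Pi.single k 1)
        rw [h, coeff_one_restrictLine] at this
        simp [Pi.single_apply] at this
        exact hk this.symm
      by_contra! H
      refine mul_ne_zero hr hd0 (MvPolynomial.funext fun v => ?_)
      rw [map_mul, map_zero, mul_eq_zero, hd]
      by_cases hv : eval v r = 0
      · exact Or.inl hv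
      · exact Or.inr (H v hv)
    obtain ⟨k, hk | hk⟩ := hder
    · obtain ⟨v, hv, h⟩ := aux _ ⟨k, hk⟩
      exact ⟨v, hv, Or.inl h⟩
    · obtain ⟨v, hv, h⟩ := aux _ ⟨k, hk⟩
      exact ⟨v, hv, Or.inr h⟩
  have hnz : ∀ s : ℂ, eval (s • x + v) (F 1) ≠ 0 ∨ eval (s • x + v) (F 2) ≠ 0 := fun s => by
    simpa [Fin.exists_fin_two] using hrv v hv s
  have hline := fun i => restrictLine_of_isHomogeneous x v (hhom i)
  have hXdvd : ∀ G : MvPolynomial (Fin 3) ℂ, eval x G = 0 →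
      ∃ a, restrictLine x v G = Polynomial.X * a := fun G hG =>
    Polynomial.X_dvd_iff.2 (by
      rw [Polynomial.coeff_zero_eq_eval_zero, eval_restrictLine]
      simpa using hG)
  obtain ⟨a, ha⟩ := hXdvd _ h1
  obtain ⟨b, hb⟩ := hXdvd _ h2
  have hdeg : ∀ {a f : Polynomial ℂ}, f = Polynomial.X * a → f.natDegree ≤ n + 1 →
      a.natDegree ≤ n := by
    rintro a _ rfl h
    rcases eq_or_ne a 0 with rfl | h0
    · simp
    · rw [Polynomial.natDegree_X_mul h0] at h
      omega
  have hcopab : IsCoprime a b := by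
    rw [Polynomial.isCoprime_iff_aeval_ne_zero_of_isAlgClosed ℂ ℂ]
    intro t
    simp only [Polynomial.coe_aeval_eq_eval]
    rcases eq_or_ne t 0 with rfl | ht
    · rw [ha, hb] at hdv
      simpa [Polynomial.coeff_X_mul, Polynomial.coeff_zero_eq_eval_zero] using hdv
    · by_contra! hab
      have hz : ∀ i, (restrictLine x v (F i)).eval t = 0 → eval (t⁻¹ • x + v) (F i) = 0 := by
        intro i hi
        rw [eval_restrictLine] at hi
        have : t⁻¹ • x + v = t⁻¹ • (x + t • v) := by
          rw [smul_add, smul_smul, inv_mul_cancel₀ ht, one_smul]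
        rw [this, (hhom i).eval_smul_eq, hi, mul_zero]
      rcases hnz t⁻¹ with h | h
      · exact h (hz 1 (by simp [ha, hab.1]))
      · exact h (hz 2 (by simp [hb, hab.2]))
  have htop : a.coeff n ≠ 0 ∨ b.coeff n ≠ 0 := by
    rw [← Polynomial.coeff_X_mul a, ← Polynomial.coeff_X_mul b, ← ha, ← hb, (hline 1).2,
      (hline 2).2]
    simpa using hnz 0
  obtain ⟨c, hc0, hc, hcF⟩ := hconic v
  obtain ⟨M, hM⟩ := hc.exists_eval_eq_sum
  have key : n ≤ 1 := by
    refine le_one_of_conic_relation (h := restrictLine x v (F 0)) (k₀ := M 0 0)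
      (k₁ := M 0 1 + M 1 0) (k₂ := M 0 2 + M 2 0) (k₃ := M 1 1) (k₄ := M 1 2 + M 2 1)
      (k₅ := M 2 2) (by simpa [eval_restrictLine] using h0) (hline 0).1 (hdeg ha (hline 1).1)
      (hdeg hb (hline 2).1) htop hcopab ?_ ?_
    · rintro ⟨k0, k1, k2, k3, k4, k5⟩
      refine hc0 (MvPolynomial.funext fun y => ?_)
      simp only [hM, Fin.sum_univ_three, map_zero]
      linear_combination (y 0) ^ 2 * k0 + y 0 * y 1 * k1 + y 0 * y 2 * k2 + (y 1) ^ 2 * k3 +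
        y 1 * y 2 * k4 + (y 2) ^ 2 * k5
    · rw [← ha, ← hb]
      refine Polynomial.funext fun t => ?_
      have := hcF 1 t
      rw [hM] at this
      simp only [Fin.sum_univ_three, one_smul, ← eval_restrictLine] at this
      simp only [Polynomial.eval_add, Polynomial.eval_mul, Polynomial.eval_pow,
        Polynomial.eval_C, Polynomial.eval_zero]
      rw [← this]
      ring
  omega

theorem MvPolynomial.eval_bind₁ {σ τ : Type*} (F : σ → MvPolynomial τ ℂ) (c : MvPolynomial σ ℂ)
    (y : τ → ℂ) : eval y (bind₁ F c) = eval (fun i => eval y (F i)) c := by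
  rw [← coe_aeval_eq_eval, RingHom.coe_coe, aeval_bind₁]
  rfl

/-- A homogeneous polynomial of positive degree vanishes at some point of the projective line
through `x` and `v`. -/
theorem MvPolynomial.IsHomogeneous.exists_eval_eq_zero {σ : Type*} {D : MvPolynomial σ ℂ} {k : ℕ}
    (hD : D.IsHomogeneous k) (hk : k ≠ 0) (x v : σ → ℂ) :
    eval x D = 0 ∨ ∃ s : ℂ, eval (s • x + v) D = 0 := by
  by_cases hx : eval x D = 0
  · exact Or.inl hx
  obtain ⟨hdeg, hcoeff⟩ := restrictLine_of_isHomogeneous v x hD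
  have hk' : k ≤ (restrictLine v x D).natDegree :=
    Polynomial.le_natDegree_of_ne_zero (hcoeff ▸ hx)
  obtain ⟨s, hs⟩ := IsAlgClosed.exists_root (restrictLine v x D)
    (fun h => hk (by
      have := Polynomial.natDegree_eq_zero_iff_degree_le_zero.2 h.le
      omega))
  refine Or.inr ⟨s, ?_⟩
  rw [Polynomial.IsRoot, eval_restrictLine, add_comm] at hs
  exact hs

theorem LinearEquiv.apply_eq_sum_single {n : ℕ} (A : (Fin n → ℂ) ≃ₗ[ℂ] (Fin n → ℂ))
    (w : Fin n → ℂ) (i : Fin n) : A w i = ∑ j, A (Pi.single j 1) i * w j := by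
  have := congrFun (A.toLinearMap.pi_apply_eq_sum_univ w) i
  simp only [LinearEquiv.coe_coe, Finset.sum_apply, Pi.smul_apply, smul_eq_mul] at this
  rw [this]
  refine Finset.sum_congr rfl fun j _ => ?_
  have hj : (fun k => if j = k then (1 : ℂ) else 0) = Pi.single j 1 := by
    funext k
    simp [Pi.single_apply, eq_comm]
  rw [mul_comm, hj]

open MvPolynomial in
/-- Let `f : ℂP² ⇢ ℂP²` be a dominant rational map given by three coprime
homogeneous polynomials of degree `e`, taking every line into a plane curve of
degree at most 2. Then `e ≤ 2`. -/
theorem stmt_14 (e : ℕ) (F : Fin 3 → MvPolynomial (Fin 3) ℂ)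
    (hhom : ∀ i, (F i).IsHomogeneous e)
    (hcop : ∀ D : MvPolynomial (Fin 3) ℂ,
      (∀ i, D ∣ F i) → IsUnit D)
    (hdom : ∀ g : MvPolynomial (Fin 3) ℂ, g ≠ 0 →
      (∃ dg : ℕ, 0 < dg ∧ g.IsHomogeneous dg) →
      ∃ x : Fin 3 → ℂ, MvPolynomial.eval (fun i => MvPolynomial.eval x (F i)) g ≠ 0)
    (hconic : ∀ ℓ : MvPolynomial (Fin 3) ℂ, ℓ ≠ 0 → ℓ.IsHomogeneous 1 →
      ∃ c : MvPolynomial (Fin 3) ℂ, c ≠ 0 ∧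
        (∃ dc : ℕ, 0 < dc ∧ dc ≤ 2 ∧ c.IsHomogeneous dc) ∧
        ∀ x : Fin 3 → ℂ, MvPolynomial.eval x ℓ = 0 →
          MvPolynomial.eval (fun i => MvPolynomial.eval x (F i)) c = 0) :
    e ≤ 2 := by
  have hconic₂ : ∀ x v : Fin 3 → ℂ, ∃ c : MvPolynomial (Fin 3) ℂ, c ≠ 0 ∧ c.IsHomogeneous 2 ∧
      ∀ s t : ℂ, eval (fun i => eval (s • x + t • v) (F i)) c = 0 := by
    intro x v
    obtain ⟨ℓ, hℓ0, hℓ, hℓz⟩ := exists_linear_form x v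
    obtain ⟨c, hc0, ⟨d, hd0, hd2, hc⟩, hcz⟩ := hconic ℓ hℓ0 hℓ
    obtain rfl | rfl : d = 1 ∨ d = 2 := by omega
    · exact ⟨c * X 0, mul_ne_zero hc0 (X_ne_zero 0), hc.mul (isHomogeneous_X _ _),
        fun s t => by rw [map_mul, hcz _ (hℓz s t), zero_mul]⟩
    · exact ⟨c, hc0, hc, fun s t => hcz _ (hℓz s t)⟩
  have hlin : ∀ w : Fin 3 → ℂ, w ≠ 0 → ∃ y, ∑ j, w j * eval y (F j) ≠ 0 := by
    intro w hw
    have heval : ∀ y, eval y (∑ j, C (w j) * X j : MvPolynomial (Fin 3) ℂ) = ∑ j, w j * y j := by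
      simp
    obtain ⟨y, hy⟩ := hdom (∑ j, C (w j) * X j) (fun h => hw (by
      funext i
      have := heval (Pi.single i 1)
      rw [h] at this
      simpa [Pi.single_apply] using this.symm))
      ⟨1, one_pos, IsHomogeneous.sum _ _ _ fun i _ => isHomogeneous_C_mul_X _ _⟩
    exact ⟨y, by rwa [heval] at hy⟩
  -- a line without base points and the conic containing its image
  obtain ⟨x₀, hx₀⟩ := hdom (X 0) (X_ne_zero 0) ⟨1, one_pos, isHomogeneous_X _ _⟩
  rw [eval_X] at hx₀
  obtain ⟨r, hr, hrv⟩ := exists_eliminant F ⟨0, fun h => hx₀ (by simp [h])⟩ hcop x₀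
  obtain ⟨v₀, hv₀⟩ : ∃ v, eval v r ≠ 0 := by
    by_contra! h
    exact hr (MvPolynomial.funext fun y => by simp [h y])
  obtain ⟨c, hc0, hc, hcz⟩ := hconic₂ x₀ v₀
  -- a point with image off that conic at which the differential is not too degenerate
  obtain ⟨k, hk⟩ : ∃ k, F 0 * pderiv k (F 1) - F 1 * pderiv k (F 0) ≠ 0 := by
    by_contra! h
    obtain ⟨a, b, hab, hrel⟩ := exists_linear_relation fun k => sub_eq_zero.1 (h k)
    obtain ⟨y, hy⟩ := hlin ![a, b, 0] (fun h => by
      have h0 := congrFun h 0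
      have h1 := congrFun h 1
      simp at h0 h1
      tauto)
    have := congrArg (eval y) hrel
    simp [Fin.sum_univ_three] at hy this
    exact hy this
  have hcF : bind₁ F c ≠ 0 := by
    intro h
    obtain ⟨y, hy⟩ := hdom c hc0 ⟨2, two_pos, hc⟩
    have := congrArg (eval y) h
    rw [eval_bind₁] at this
    exact hy this
  obtain ⟨x, hx⟩ : ∃ x, eval x (bind₁ F c * (F 0 * pderiv k (F 1) - F 1 * pderiv k (F 0))) ≠ 0 := by
    by_contra! h
    exact mul_ne_zero hcF hk (MvPolynomial.funext fun y => by rw [h y, map_zero])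
  rw [map_mul, eval_bind₁] at hx
  have hcx := left_ne_zero_of_mul hx
  have hWx := right_ne_zero_of_mul hx
  simp only [map_sub, map_mul] at hWx
  set z : Fin 3 → ℂ := fun i => eval x (F i) with hz
  have hz0 : z ≠ 0 := fun h => hcx (by
    rw [h, ← zero_smul ℂ (0 : Fin 3 → ℂ), hc.eval_smul_eq]
    simp)
  -- linear change of coordinates in the target
  obtain ⟨A', hA'⟩ := SeparatingDual.exists_continuousLinearEquiv_apply_eq (R := ℂ) hz0
    (y := Pi.single (0 : Fin 3) (1 : ℂ)) (by simp)
  obtain ⟨A, hA⟩ : ∃ A : (Fin 3 → ℂ) ≃ₗ[ℂ] (Fin 3 → ℂ), A z = Pi.single 0 1 :=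
    ⟨A'.toLinearEquiv, hA'⟩
  have hline : ∀ w : Fin 3 → ℂ, A w 1 = 0 → A w 2 = 0 → w = A w 0 • z := by
    intro w h1 h2
    apply A.injective
    rw [map_smul, hA]
    funext i
    fin_cases i <;> simp [h1, h2]
  let G : Fin 3 → MvPolynomial (Fin 3) ℂ := fun i => ∑ j, C (A (Pi.single j 1) i) * F j
  have hG : ∀ y i, eval y (G i) = A (fun j => eval y (F j)) i := by
    intro y i
    rw [A.apply_eq_sum_single]
    simp [G]
  have hGd : ∀ y i, eval y (pderiv k (G i)) = A (fun j => eval y (pderiv k (F j))) i := by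
    intro y i
    rw [A.apply_eq_sum_single]
    simp [G]
  have hGhom : ∀ i, (G i).IsHomogeneous e := fun i =>
    IsHomogeneous.sum _ _ _ fun j _ => (hhom j).C_mul _
  have hG1 : G 1 ≠ 0 := by
    intro h
    obtain ⟨y, hy⟩ := hlin (fun j => A (Pi.single j 1) 1) (fun hw => by
      have := A.apply_eq_sum_single (A.symm (Pi.single 1 1)) 1
      have hw' : ∀ j, A (Pi.single j 1) 1 = 0 := congrFun hw
      simp [hw'] at this)
    rw [← A.apply_eq_sum_single (fun j => eval y (F j)) 1, ← hG, h, map_zero] at hy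
    exact hy rfl
  have hmeet : ∀ y, (∃ i, eval y (F i) ≠ 0) → eval (fun i => eval y (F i)) c = 0 →
      eval y (G 1) = 0 → eval y (G 2) = 0 → False := by
    rintro y ⟨i, hi⟩ hcy h1 h2
    rw [hG] at h1 h2
    have hw := hline _ h1 h2
    rw [hw, hc.eval_smul_eq] at hcy
    have hg := eq_zero_of_pow_eq_zero ((mul_eq_zero.1 hcy).resolve_right hcx)
    rw [hg, zero_smul] at hw
    exact hi (congrFun hw i)
  have hGcop : ∀ D, D ∣ G 1 → D ∣ G 2 → IsUnit D := by
    intro D hD1 hD2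
    by_contra hu
    have hdeg : D.totalDegree ≠ 0 := by
      intro h
      rw [totalDegree_eq_zero_iff_eq_C] at h
      rw [h] at hu hD1
      refine hu (IsUnit.map C (isUnit_iff_ne_zero.2 fun h0 => hG1 ?_))
      rw [h0, C_0] at hD1
      exact zero_dvd_iff.1 hD1
    have hvan : ∀ y, eval y (homogeneousComponent D.totalDegree D) = 0 →
        eval y (G 1) = 0 ∧ eval y (G 2) = 0 := by
      intro y hy
      have hvan' : ∀ i, D ∣ G i → eval y (G i) = 0 := by
        intro i hi
        by_cases h0 : G i = 0
        · rw [h0, map_zero]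
        · have := map_dvd (eval y) ((hGhom i).leadingForm_dvd h0 hi)
          rwa [hy, zero_dvd_iff] at this
      exact ⟨hvan' 1 hD1, hvan' 2 hD2⟩
    rcases (homogeneousComponent_isHomogeneous D.totalDegree D).exists_eval_eq_zero hdeg x₀ v₀
      with h | ⟨s, h⟩
    · exact hmeet x₀ ⟨0, hx₀⟩ (by simpa using hcz 1 0) (hvan _ h).1 (hvan _ h).2
    · exact hmeet _ (hrv v₀ hv₀ s) (by simpa using hcz s 1) (hvan _ h).1 (hvan _ h).2
  have hGx : ∀ i, eval x (G i) = (Pi.single 0 1 : Fin 3 → ℂ) i := fun i => by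
    rw [hG, ← hA]
  refine degree_le_two_of_adapted hGhom (x := x) (by simp [hGx]) (by simp [hGx]) (by simp [hGx])
    hG1 hGcop ⟨k, ?_⟩ fun v => ?_
  · by_contra! h
    rw [hGd, hGd] at h
    have hw := hline _ h.1 h.2
    have hw0 := congrFun hw 0
    have hw1 := congrFun hw 1
    simp only [Pi.smul_apply, smul_eq_mul, hz] at hw0 hw1
    refine hWx ?_
    rw [hw0, hw1]
    ring
  · obtain ⟨q, hq0, hq, hqz⟩ := hconic₂ x v
    let B : Fin 3 → MvPolynomial (Fin 3) ℂ := fun i => ∑ j, C (A.symm (Pi.single j 1) i) * X j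
    have hB : ∀ y, eval y (bind₁ B q) = eval (A.symm y) q := by
      intro y
      rw [eval_bind₁]
      congr 2
      funext i
      rw [A.symm.apply_eq_sum_single]
      simp [B]
    refine ⟨bind₁ B q, fun h => hq0 (MvPolynomial.funext fun y => ?_), ?_, fun s t => ?_⟩
    · have := hB (A y)
      rw [h, A.symm_apply_apply, map_zero] at this
      rw [← this, map_zero]
    · have hBhom : ∀ i, (B i).IsHomogeneous 1 := fun i =>
        IsHomogeneous.sum _ _ _ fun j _ => isHomogeneous_C_mul_X _ _
      have := hq.aeval B hBhom
      rwa [one_mul] at this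
    · have hGA : ∀ y : Fin 3 → ℂ, (fun i => eval y (G i)) = A fun j => eval y (F j) :=
        fun y => funext (hG y)
      rw [hGA, hB, A.symm_apply_apply]
      exact hqz s t
end

section
/- Suppose Φ : ℂP² ⇢ S ⊂ ℂP³ is a rational map onto an irreducible surface S of degree at least 3, given by four homogeneous quadratic forms with no common factor, such that for a generic line L ⊂ ℂP², Φ(L) is an irreducible conic C whose plane P_L meets S in a curve strictly larger than C, and Φ⁻¹(P_L) is the union of L and a different line L'. If the restrictions of Φ to L and L' have degree one and Φ(L) ≠ Φ(L'), then Φ is birational onto S. -/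
open MvPolynomial

/-- The quadratic monomials in three variables. -/
def quadMonomials (x : Fin 3 → ℂ) : Fin 6 → ℂ :=
  ![x 0 * x 0, x 1 * x 1, x 2 * x 2, x 0 * x 1, x 0 * x 2, x 1 * x 2]

/-- The polarization of `quadMonomials`. -/
def quadPolar (u w : Fin 3 → ℂ) : Fin 6 → ℂ :=
  ![2 * u 0 * w 0, 2 * u 1 * w 1, 2 * u 2 * w 2,
    u 0 * w 1 + u 1 * w 0, u 0 * w 2 + u 2 * w 0, u 1 * w 2 + u 2 * w 1]

/-- The determinant of three vectors of `ℂ³`. -/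
def tripleDet (u v w : Fin 3 → ℂ) : ℂ :=
  (u 1 * v 2 - u 2 * v 1) * w 0 + (u 2 * v 0 - u 0 * v 2) * w 1 + (u 0 * v 1 - u 1 * v 0) * w 2

/-- The determinant of the symmetric matrix whose entries are listed in the order of
`quadMonomials`. -/
def symDet (p : Fin 6 → ℂ) : ℂ :=
  p 0 * p 1 * p 2 + 2 * p 3 * p 4 * p 5 - p 0 * p 5 ^ 2 - p 1 * p 4 ^ 2 - p 2 * p 3 ^ 2

theorem exists_quadMonomials_of_isHomogeneous_two {p : MvPolynomial (Fin 3) ℂ}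
    (hp : p.IsHomogeneous 2) :
    ∃ q : Fin 6 → ℂ, ∀ x, eval x p = q ⬝ᵥ quadMonomials x := by
  rw [p.as_sum]
  refine Finset.sum_induction _
    (fun p => ∃ q : Fin 6 → ℂ, ∀ x, eval x p = q ⬝ᵥ quadMonomials x) ?_ ⟨0, by simp⟩ ?_
  · rintro _ _ ⟨q, hq⟩ ⟨r, hr⟩
    exact ⟨q + r, fun x => by rw [map_add, hq, hr, add_dotProduct]⟩
  · intro d hd
    have h2 := hp (mem_support_iff.mp hd)
    simp only [Finsupp.weight_apply, Finsupp.sum_fintype, Fin.sum_univ_three, Pi.one_apply,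
      smul_eq_mul, mul_one, implies_true] at h2
    have key : ∃ k : Fin 6, ∀ x : Fin 3 → ℂ,
        x 0 ^ d 0 * x 1 ^ d 1 * x 2 ^ d 2 = quadMonomials x k := by
      generalize d 0 = a at *
      generalize d 1 = b at *
      generalize d 2 = c at *
      have ha : a ≤ 2 := by omega
      have hb : b ≤ 2 := by omega
      obtain rfl : c = 2 - a - b := by omega
      interval_cases a <;> interval_cases b <;> first | omega | skip
      · exact ⟨2, fun x => by simp [quadMonomials, sq]⟩
      · exact ⟨5, fun x => by simp [quadMonomials]⟩
      · exact ⟨1, fun x => by simp [quadMonomials, sq]⟩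
      · exact ⟨4, fun x => by simp [quadMonomials]⟩
      · exact ⟨3, fun x => by simp [quadMonomials]⟩
      · exact ⟨0, fun x => by simp [quadMonomials, sq]⟩
    obtain ⟨k, hk⟩ := key
    refine ⟨Pi.single k (coeff d p), fun x => ?_⟩
    rw [single_dotProduct, ← hk, eval_monomial, Finsupp.prod_fintype _ _ (by simp),
      Fin.prod_univ_three]

/-- The linear form with given coefficients. -/
noncomputable def linForm (n : Fin 3 → ℂ) : MvPolynomial (Fin 3) ℂ := ∑ i, C (n i) * X i

theorem eval_linForm (n x : Fin 3 → ℂ) : eval x (linForm n) = n ⬝ᵥ x := by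
  simp [linForm, dotProduct]

theorem linForm_ne_zero {n : Fin 3 → ℂ} (hn : n ≠ 0) : linForm n ≠ 0 := by
  intro h
  apply hn
  ext i
  have := eval_linForm n (Pi.single i 1)
  simpa [h] using this.symm

theorem exists_eval_ne_zero {p : MvPolynomial (Fin 3) ℂ} (hp : p ≠ 0) : ∃ x, eval x p ≠ 0 := by
  by_contra! h
  exact hp (MvPolynomial.funext fun x => by simp [h x])

theorem cross_ne_zero {x y : Fin 3 → ℂ} (hx : x ≠ 0) (hy : y ≠ 0)
    (h : ¬∃ c : ℂ, c ≠ 0 ∧ x = c • y) : crossProduct x y ≠ 0 := by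
  intro h0
  rw [cross_apply] at h0
  have e0 := congrFun h0 0
  have e1 := congrFun h0 1
  have e2 := congrFun h0 2
  simp only [Matrix.cons_val, Pi.zero_apply] at e0 e1 e2
  obtain ⟨i, hi⟩ := Function.ne_iff.mp hy
  simp only [Pi.zero_apply] at hi
  have hxy : x = (x i / y i) • y := by
    ext j
    simp only [Pi.smul_apply, smul_eq_mul]
    rw [div_mul_eq_mul_div, eq_div_iff hi]
    fin_cases i <;> fin_cases j <;> simp <;> grind
  refine h ⟨x i / y i, fun hc => hx ?_, hxy⟩
  rw [hxy, hc, zero_smul]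

theorem cross_dotProduct_eq_tripleDet (u v w : Fin 3 → ℂ) :
    crossProduct u v ⬝ᵥ w = tripleDet u v w := by
  simp [cross_apply, dotProduct, Fin.sum_univ_three, tripleDet]

theorem symDet_quadPolar (u w : Fin 3 → ℂ) : symDet (quadPolar u w) = 0 := by
  simp [symDet, quadPolar]
  ring

theorem symDet_pencil (a b : ℂ) (u w u' w' : Fin 3 → ℂ) :
    symDet (a • quadPolar u w + b • quadPolar u' w') =
      -2 * a * b * (a * (tripleDet u w u' * tripleDet u w w') +
        b * (tripleDet u' w' u * tripleDet u' w' w)) := by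
  simp [symDet, quadPolar, tripleDet]
  ring

theorem tripleDet_add_eq_zero {u w u' w' : Fin 3 → ℂ} (b : ℂ)
    (hn : crossProduct u' w' ≠ 0) (h : quadPolar u' w' = b • quadPolar u w) :
    tripleDet u w (u' + w') = 0 := by
  have e0 := congrFun h 0
  have e1 := congrFun h 1
  have e2 := congrFun h 2
  have e3 := congrFun h 3
  have e4 := congrFun h 4
  have e5 := congrFun h 5
  simp [quadPolar] at e0 e1 e2 e3 e4 e5
  set s := tripleDet u w u' with hs
  set t := tripleDet u w w' with ht
  have f0 : u' 0 * t + w' 0 * s = 0 := by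
    simp only [hs, ht, tripleDet]
    linear_combination (u 1 * w 2 - u 2 * w 1) * e0 + (u 2 * w 0 - u 0 * w 2) * e3 +
      (u 0 * w 1 - u 1 * w 0) * e4
  have f1 : u' 1 * t + w' 1 * s = 0 := by
    simp only [hs, ht, tripleDet]
    linear_combination (u 1 * w 2 - u 2 * w 1) * e3 + (u 2 * w 0 - u 0 * w 2) * e1 +
      (u 0 * w 1 - u 1 * w 0) * e5
  have f2 : u' 2 * t + w' 2 * s = 0 := by
    simp only [hs, ht, tripleDet]
    linear_combination (u 1 * w 2 - u 2 * w 1) * e4 + (u 2 * w 0 - u 0 * w 2) * e5 +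
      (u 0 * w 1 - u 1 * w 0) * e2
  have hst : s = 0 ∧ t = 0 := by
    obtain ⟨i, hi⟩ := Function.ne_iff.mp hn
    rw [cross_apply] at hi
    fin_cases i <;> simp at hi <;> constructor <;> apply mul_left_cancel₀ hi
    · linear_combination u' 1 * f2 - u' 2 * f1
    · linear_combination w' 2 * f1 - w' 1 * f2
    · linear_combination u' 2 * f0 - u' 0 * f2
    · linear_combination w' 0 * f2 - w' 2 * f0
    · linear_combination u' 0 * f1 - u' 1 * f0
    · linear_combination w' 1 * f0 - w' 0 * f1
  have : tripleDet u w (u' + w') = s + t := by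
    simp only [hs, ht, tripleDet, Pi.add_apply]; ring
  rw [this, hst.1, hst.2, add_zero]

theorem quadPolar_comm (u w : Fin 3 → ℂ) : quadPolar u w = quadPolar w u := by
  ext i; fin_cases i <;> simp [quadPolar] <;> ring

theorem quadMonomials_sub (x y : Fin 3 → ℂ) :
    quadPolar (x + y) (x - y) = (2 : ℂ) • (quadMonomials x - quadMonomials y) := by
  ext i; fin_cases i <;> simp [quadPolar, quadMonomials] <;> ring

theorem quadMonomials_reflect (l a b : ℂ) (v p q : Fin 3 → ℂ) :
    quadMonomials (l • v + a • p + b • q) = quadMonomials (-l • v + a • p + b • q) +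
      (2 * l * a) • quadPolar v p + (2 * l * b) • quadPolar v q := by
  ext i; fin_cases i <;> simp [quadPolar, quadMonomials] <;> ring

theorem cramer_three (x u v w : Fin 3 → ℂ) :
    tripleDet u v w • x =
      tripleDet x v w • u + tripleDet u x w • v + tripleDet u v x • w := by
  ext i; fin_cases i <;> simp [tripleDet] <;> ring

theorem quadPolar_smul_left (c : ℂ) (u w : Fin 3 → ℂ) :
    quadPolar (c • u) w = c • quadPolar u w := by
  ext i; fin_cases i <;> simp [quadPolar] <;> ring

/-- Two degenerate members `u ∘ w`, `u' ∘ w'` whose lines meet in the point `u` and in the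
point `u'` share a factor. -/
theorem exists_common_factor {u w u' w' : Fin 3 → ℂ} {N : Submodule ℂ (Fin 6 → ℂ)}
    (h : quadPolar u w ∈ N) (h' : quadPolar u' w' ∈ N) (hn' : crossProduct u' w' ≠ 0)
    (h1 : tripleDet u w u' = 0) (h2 : tripleDet u' w' u = 0)
    (h3 : tripleDet u w (u' + w') ≠ 0) :
    ∃ v p q : Fin 3 → ℂ, tripleDet v p q ≠ 0 ∧ quadPolar v p ∈ N ∧ quadPolar v q ∈ N := by
  have hd : tripleDet u w w' ≠ 0 := by
    intro h0
    apply h3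
    simp only [tripleDet, Pi.add_apply] at *
    linear_combination h0 + h1
  have hc := cramer_three u' u w w'
  have h2' : tripleDet u u' w' = 0 := by
    rw [← h2]; simp only [tripleDet]; ring
  rw [h1, h2', zero_smul, zero_smul, add_zero, add_zero] at hc
  have he : tripleDet u' w w' ≠ 0 := by
    intro h0
    rw [h0, zero_smul] at hc
    have : u' = 0 := (smul_eq_zero.mp hc).resolve_left hd
    exact hn' (by simp [this])
  refine ⟨u, w, w', hd, h, ?_⟩
  have := N.smul_mem (tripleDet u w w') h'
  rwa [← quadPolar_smul_left, hc, quadPolar_smul_left, N.smul_mem_iff he] at this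

/-- A two-dimensional space of ternary quadratic forms with enough reducible members
has members sharing a linear factor. -/
theorem exists_common_factor_of_generic {N : Submodule ℂ (Fin 6 → ℂ)}
    (hN : Module.finrank ℂ N = 2)
    (H : ∀ n₁ n₂ n₃ : Fin 3 → ℂ, n₁ ≠ 0 → n₂ ≠ 0 → n₃ ≠ 0 →
      ∃ u w : Fin 3 → ℂ, crossProduct u w ≠ 0 ∧ quadPolar u w ∈ N ∧
        n₁ ⬝ᵥ (u + w) ≠ 0 ∧ n₂ ⬝ᵥ (u + w) ≠ 0 ∧ n₃ ⬝ᵥ (u + w) ≠ 0) :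
    ∃ v p q : Fin 3 → ℂ, tripleDet v p q ≠ 0 ∧ quadPolar v p ∈ N ∧ quadPolar v q ∈ N := by
  set e : Fin 3 → ℂ := crossProduct ![0, 1, 0] ![0, 0, 1] with he
  have he0 : e ≠ 0 := fun h => by simpa [he, cross_apply] using congrFun h 0
  obtain ⟨u₁, w₁, hn₁, hN₁, g₁, -, -⟩ := H e e e he0 he0 he0
  obtain ⟨u₂, w₂, hn₂, hN₂, g₂, -, -⟩ := H _ _ _ hn₁ hn₁ hn₁
  obtain ⟨u₃, w₃, hn₃, hN₃, g₃₁, g₃₂, -⟩ := H _ _ _ hn₁ hn₂ hn₂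
  obtain ⟨u₄, w₄, hn₄, hN₄, g₄₁, g₄₂, g₄₃⟩ := H _ _ _ hn₁ hn₂ hn₃
  rw [cross_dotProduct_eq_tripleDet] at *
  have hP₁ : quadPolar u₁ w₁ ≠ 0 := fun h =>
    g₁ (tripleDet_add_eq_zero 0 hn₁ (by rw [h, zero_smul]))
  have hspan : ∀ p ∈ N, ∃ a b : ℂ, p = a • quadPolar u₁ w₁ + b • quadPolar u₂ w₂ := by
    have hli : LinearIndependent ℂ ![quadPolar u₁ w₁, quadPolar u₂ w₂] := by
      rw [LinearIndependent.pair_iff' hP₁]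
      exact fun a h => g₂ (tripleDet_add_eq_zero a hn₂ h.symm)
    have hle : Submodule.span ℂ {quadPolar u₁ w₁, quadPolar u₂ w₂} ≤ N := by
      rw [Submodule.span_le]
      rintro _ (rfl | rfl) <;> assumption
    have heq := Submodule.eq_of_le_of_finrank_eq hle (by
      have := finrank_span_eq_card hli
      rw [Matrix.range_cons_cons_empty] at this
      rw [this, hN, Fintype.card_fin])
    intro p hp
    rw [← heq, Submodule.mem_span_pair] at hp
    obtain ⟨a, b, h⟩ := hp
    exact ⟨a, b, h.symm⟩
  obtain ⟨a, b, hab⟩ := hspan _ hN₃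
  obtain ⟨a', b', hab'⟩ := hspan _ hN₄
  have ha : a ≠ 0 := by
    rintro rfl
    exact g₃₂ (tripleDet_add_eq_zero b hn₃ (by simpa using hab))
  have hb : b ≠ 0 := by
    rintro rfl
    exact g₃₁ (tripleDet_add_eq_zero a hn₃ (by simpa using hab))
  have ha' : a' ≠ 0 := by
    rintro rfl
    exact g₄₂ (tripleDet_add_eq_zero b' hn₄ (by simpa using hab'))
  have hb' : b' ≠ 0 := by
    rintro rfl
    exact g₄₁ (tripleDet_add_eq_zero a' hn₄ (by simpa using hab'))
  have hne : a * b' - a' * b ≠ 0 := by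
    intro h
    refine g₄₃ (tripleDet_add_eq_zero (a' / a) hn₄ ?_)
    have hb'' : b' = a' / a * b := by field_simp; linear_combination h
    have ha'' : a' = a' / a * a := by field_simp
    rw [hab, hab', smul_add, smul_smul, smul_smul, ← ha'', ← hb'']
  have d := symDet_quadPolar u₃ w₃
  have d' := symDet_quadPolar u₄ w₄
  rw [hab, symDet_pencil] at d
  rw [hab', symDet_pencil] at d'
  have k := (mul_eq_zero.mp d).resolve_left (by simp [ha, hb])
  have k' := (mul_eq_zero.mp d').resolve_left (by simp [ha', hb'])
  have c₁ : tripleDet u₁ w₁ u₂ * tripleDet u₁ w₁ w₂ = 0 :=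
    mul_left_cancel₀ hne (by linear_combination b' * k - b * k')
  have c₂ : tripleDet u₂ w₂ u₁ * tripleDet u₂ w₂ w₁ = 0 :=
    mul_left_cancel₀ hne (by linear_combination a * k' - a' * k)
  have swap : ∀ u w x : Fin 3 → ℂ, tripleDet w u x = -tripleDet u w x := fun u w x => by
    simp only [tripleDet]; ring
  have hn₂' : crossProduct w₂ u₂ ≠ 0 := by
    rwa [← cross_anticomm, neg_ne_zero]
  rcases mul_eq_zero.mp c₁ with h₁ | h₁ <;> rcases mul_eq_zero.mp c₂ with h₂ | h₂
  · exact exists_common_factor hN₁ hN₂ hn₂ h₁ h₂ g₂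
  · rw [quadPolar_comm] at hN₁
    refine exists_common_factor hN₁ hN₂ hn₂ ?_ h₂ ?_ <;> rw [swap] <;> simpa
  · rw [quadPolar_comm] at hN₂
    refine exists_common_factor hN₁ hN₂ hn₂' h₁ ?_ ?_
    · rw [swap]; simpa
    · rwa [add_comm]
  · rw [quadPolar_comm] at hN₁ hN₂
    refine exists_common_factor hN₁ hN₂ hn₂' ?_ ?_ ?_
    · rw [swap]; simpa
    · rw [swap]; simpa
    · rw [swap, add_comm w₂]; simpa


/-- Lemma "Phi-birat": let `Φ : ℂP² ⇢ ℂP³` be given by four quadratic forms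
`φ₀,…,φ₃` with no common factor, and let `S` be an irreducible surface of
degree at least 3 (cut out by an irreducible homogeneous `s`) containing the
image. Suppose that for every line `L = {ℓ·x = 0}` in a nonempty Zariski open
set of lines, the image `Φ(L)` spans a unique plane `P_L = {m·z = 0}` (so the
conic `Φ(L)` is irreducible), `P_L ∩ S` is strictly larger than `Φ(L)`, the
`Φ`-preimage of `P_L` is contained in the union of `L` and a different line
`L'`, the restrictions of `Φ` to `L` and `L'` are generically injective (degree
one), and `Φ(L) ≠ Φ(L')`. Then `Φ` is birational onto `S`, i.e. generically
injective (up to scalars). -/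
theorem stmt_16 (φ : Fin 4 → MvPolynomial (Fin 3) ℂ)
    (hhom : ∀ i, (φ i).IsHomogeneous 2)
    (hcop : ∀ D : MvPolynomial (Fin 3) ℂ, (∀ i, D ∣ φ i) → IsUnit D)
    (s : MvPolynomial (Fin 4) ℂ) (ds : ℕ)
    (hirr : Irreducible s) (hs : s.IsHomogeneous ds) (hds : 3 ≤ ds)
    (hS : ∀ x : Fin 3 → ℂ,
      MvPolynomial.eval (fun i => MvPolynomial.eval x (φ i)) s = 0)
    (g : MvPolynomial (Fin 3) ℂ) (hg : g ≠ 0)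
    (hgen : ∀ ℓ : Fin 3 → ℂ, ℓ ≠ 0 → MvPolynomial.eval ℓ g ≠ 0 →
      ∃ (m : Fin 4 → ℂ) (ℓ' : Fin 3 → ℂ),
        m ≠ 0 ∧
        -- the plane P_L contains Φ(L)
        (∀ x : Fin 3 → ℂ, (∑ i, ℓ i * x i) = 0 →
          ∑ j, m j * MvPolynomial.eval x (φ j) = 0) ∧
        -- the plane of Φ(L) is unique (Φ(L) is an irreducible conic)
        (∀ m' : Fin 4 → ℂ, m' ≠ 0 →
          (∀ x : Fin 3 → ℂ, (∑ i, ℓ i * x i) = 0 →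
            ∑ j, m' j * MvPolynomial.eval x (φ j) = 0) →
          ∃ c : ℂ, m' = c • m) ∧
        -- P_L ∩ S is strictly bigger than the conic Φ(L)
        (∃ z : Fin 4 → ℂ, z ≠ 0 ∧ MvPolynomial.eval z s = 0 ∧
          (∑ j, m j * z j) = 0 ∧
          ¬∃ x : Fin 3 → ℂ, (∑ i, ℓ i * x i) = 0 ∧
            ∃ c : ℂ, c ≠ 0 ∧ z = c • fun j => MvPolynomial.eval x (φ j)) ∧
        -- L' is a line different from L
        ℓ' ≠ 0 ∧ (¬∃ c : ℂ, ℓ' = c • ℓ) ∧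
        -- Φ⁻¹(P_L) ⊆ L ∪ L'
        (∀ x : Fin 3 → ℂ, (∑ j, m j * MvPolynomial.eval x (φ j)) = 0 →
          (∑ i, ℓ i * x i) = 0 ∨ (∑ i, ℓ' i * x i) = 0) ∧
        -- Φ restricted to L has degree one
        (∀ x y : Fin 3 → ℂ, x ≠ 0 → y ≠ 0 →
          (∑ i, ℓ i * x i) = 0 → (∑ i, ℓ i * y i) = 0 →
          (∃ c : ℂ, c ≠ 0 ∧
            (fun j => MvPolynomial.eval x (φ j)) =
              c • fun j => MvPolynomial.eval y (φ j)) →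
          ∃ c' : ℂ, c' ≠ 0 ∧ x = c' • y) ∧
        -- Φ restricted to L' has degree one
        (∀ x y : Fin 3 → ℂ, x ≠ 0 → y ≠ 0 →
          (∑ i, ℓ' i * x i) = 0 → (∑ i, ℓ' i * y i) = 0 →
          (∃ c : ℂ, c ≠ 0 ∧
            (fun j => MvPolynomial.eval x (φ j)) =
              c • fun j => MvPolynomial.eval y (φ j)) →
          ∃ c' : ℂ, c' ≠ 0 ∧ x = c' • y) ∧
        -- Φ(L) ≠ Φ(L')
        (∃ x : Fin 3 → ℂ, x ≠ 0 ∧ (∑ i, ℓ i * x i) = 0 ∧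
          ∀ y : Fin 3 → ℂ, (∑ i, ℓ' i * y i) = 0 →
            ¬∃ c : ℂ, c ≠ 0 ∧
              (fun j => MvPolynomial.eval x (φ j)) =
                c • fun j => MvPolynomial.eval y (φ j))) :
    -- Φ is birational onto S: generically injective up to scalars
    ∃ h : MvPolynomial (Fin 3) ℂ, h ≠ 0 ∧
      ∀ x y : Fin 3 → ℂ,
        MvPolynomial.eval x h ≠ 0 → MvPolynomial.eval y h ≠ 0 →
        (∃ c : ℂ, c ≠ 0 ∧
          (fun j => MvPolynomial.eval x (φ j)) =
            c • fun j => MvPolynomial.eval y (φ j)) →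
        ∃ c' : ℂ, c' ≠ 0 ∧ x = c' • y := by
  have hdot : ∀ (n x : Fin 3 → ℂ), ∑ i, n i * x i = n ⬝ᵥ x := fun _ _ => rfl
  simp only [hdot] at hgen
  obtain ⟨Q, hQ⟩ : ∃ Q : Matrix (Fin 4) (Fin 6) ℂ, ∀ i x, eval x (φ i) = Q i ⬝ᵥ quadMonomials x :=
    Classical.skolem.mp fun i => exists_quadMonomials_of_isHomogeneous_two (hhom i)
  have hev : ∀ x, (fun j => eval x (φ j)) = Matrix.mulVec Q (quadMonomials x) :=
    fun x => _root_.funext fun j => hQ j x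
  have hm_eval : ∀ (m : Fin 4 → ℂ) x, ∑ j, m j * eval x (φ j) =
      m ⬝ᵥ Matrix.mulVec Q (quadMonomials x) := fun m x => by rw [← hev]; rfl
  simp only [hev, hm_eval] at hgen ⊢
  have hrow : LinearIndependent ℂ (Matrix.row Q) := by
    rw [Fintype.linearIndependent_iff]
    intro m₀ hm₀
    by_contra! hne
    have hm₀' : m₀ ≠ 0 := fun h => by simp [h] at hne
    have hvan : ∀ x, m₀ ⬝ᵥ Matrix.mulVec Q (quadMonomials x) = 0 := fun x => by
      have : Matrix.vecMul m₀ Q = 0 := by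
        rw [Matrix.vecMul_eq_sum]; exact hm₀
      rw [Matrix.dotProduct_mulVec, this, zero_dotProduct]
    obtain ⟨ℓ, hℓ⟩ := exists_eval_ne_zero
      (mul_ne_zero hg (linForm_ne_zero (n := 1) one_ne_zero))
    rw [map_mul, eval_linForm, mul_ne_zero_iff] at hℓ
    have hℓ0 : ℓ ≠ 0 := by rintro rfl; simp at hℓ
    obtain ⟨m, ℓ', hm, -, huniq, -, hℓ', -, hpre, -⟩ := hgen ℓ hℓ0 hℓ.1
    obtain ⟨c, hc⟩ := huniq m₀ hm₀' fun x _ => hvan x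
    have hc0 : c ≠ 0 := by rintro rfl; simp [hc] at hm₀'
    obtain ⟨x, hx⟩ := exists_eval_ne_zero
      (mul_ne_zero (linForm_ne_zero hℓ0) (linForm_ne_zero hℓ'))
    rw [map_mul, eval_linForm, eval_linForm, mul_ne_zero_iff] at hx
    have hmx := hvan x
    rw [hc, smul_dotProduct, smul_eq_zero] at hmx
    exact (hpre x (hmx.resolve_left hc0)).elim hx.1 hx.2
  have hker : Module.finrank ℂ (LinearMap.ker (Matrix.mulVecLin Q)) = 2 := by
    have h1 := LinearMap.finrank_range_add_finrank_ker (Matrix.mulVecLin Q)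
    have h2 : Module.finrank ℂ (LinearMap.range (Matrix.mulVecLin Q)) = 4 :=
      hrow.rank_matrix
    simp [h2] at h1
    omega
  by_contra! hcon
  obtain ⟨v, p, q, hd, hvp, hvq⟩ := exists_common_factor_of_generic hker (by
    intro n₁ n₂ n₃ hn₁ hn₂ hn₃
    obtain ⟨x, y, hx, hy, ⟨c, hc, hxy⟩, hne⟩ := hcon _
      (mul_ne_zero (mul_ne_zero (linForm_ne_zero hn₁) (linForm_ne_zero hn₂)) (linForm_ne_zero hn₃))
    simp only [map_mul, eval_linForm, mul_ne_zero_iff] at hx hy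
    have hx0 : x ≠ 0 := by rintro rfl; simp at hx
    have hy0 : y ≠ 0 := by rintro rfl; simp at hy
    obtain ⟨d, rfl⟩ : ∃ d : ℂ, c = d * d := IsAlgClosed.exists_eq_mul_self c
    have hd : d ≠ 0 := by rintro rfl; simp at hc
    have hdy0 : d • y ≠ 0 := smul_ne_zero hd hy0
    have hcr : crossProduct x (d • y) ≠ 0 := by
      refine cross_ne_zero hx0 hdy0 ?_
      rintro ⟨c', hc', h⟩
      exact hne (c' * d) (mul_ne_zero hc' hd) (by rw [h, smul_smul])
    have hsum : x + d • y + (x - d • y) = (2 : ℂ) • x := by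
      rw [two_smul]; abel
    refine ⟨x + d • y, x - d • y, ?_, ?_, ?_⟩
    · have : crossProduct (x + d • y) (x - d • y) = (-2 : ℂ) • crossProduct x (d • y) := by
        ext i; fin_cases i <;> simp [cross_apply] <;> ring
      rw [this]
      exact smul_ne_zero (by norm_num) hcr
    · have hmon : quadMonomials (d • y) = (d * d) • quadMonomials y := by
        ext i; fin_cases i <;> simp [quadMonomials] <;> ring
      rw [LinearMap.mem_ker, Matrix.mulVecLin_apply, quadMonomials_sub, Matrix.mulVec_smul,
        Matrix.mulVec_sub, hxy, hmon, Matrix.mulVec_smul, sub_self, smul_zero]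
    · simp [hsum, hx])
  have hreflect : ∀ l a b : ℂ, Matrix.mulVec Q (quadMonomials (l • v + a • p + b • q)) =
      Matrix.mulVec Q (quadMonomials (-l • v + a • p + b • q)) := fun l a b => by
    rw [LinearMap.mem_ker, Matrix.mulVecLin_apply] at hvp hvq
    rw [quadMonomials_reflect, Matrix.mulVec_add, Matrix.mulVec_add, Matrix.mulVec_smul,
      Matrix.mulVec_smul, hvp, hvq, smul_zero, smul_zero, add_zero, add_zero]
  have hv : v ≠ 0 := by rintro rfl; simp [tripleDet] at hd
  have hp : p ≠ 0 := by rintro rfl; simp [tripleDet] at hd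
  obtain ⟨ℓ, hℓ⟩ := exists_eval_ne_zero
    (mul_ne_zero hg (mul_ne_zero (linForm_ne_zero hv) (linForm_ne_zero hp)))
  simp only [map_mul, eval_linForm, mul_ne_zero_iff] at hℓ
  obtain ⟨hgℓ, hvℓ, hpℓ⟩ := hℓ
  rw [dotProduct_comm] at hvℓ hpℓ
  have hℓ0 : ℓ ≠ 0 := by rintro rfl; simp at hvℓ
  obtain ⟨m, ℓ', -, hmL, -, -, -, -, hpre, -, -, x, -, hxL, hx⟩ := hgen ℓ hℓ0 hgℓ
  obtain ⟨l, a, b, rfl⟩ : ∃ l a b : ℂ, x = l • v + a • p + b • q := by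
    refine ⟨tripleDet x p q / tripleDet v p q, tripleDet v x q / tripleDet v p q,
      tripleDet v p x / tripleDet v p q, ?_⟩
    have := cramer_three x v p q
    apply smul_right_injective _ hd
    simp only [smul_add, smul_smul, mul_div_cancel₀ _ hd, this]
  have hL : ∀ l a b : ℂ, ℓ ⬝ᵥ (l • v + a • p + b • q) = 0 →
      ℓ ⬝ᵥ (-l • v + a • p + b • q) = 0 ∨ ℓ' ⬝ᵥ (-l • v + a • p + b • q) = 0 :=
    fun l a b h => hpre _ (by rw [← hreflect]; exact hmL _ h)
  refine hx (-l • v + a • p + b • q) ?_ ⟨1, one_ne_zero, by rw [one_smul, hreflect]⟩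
  have h₁ := hL (ℓ ⬝ᵥ p) (-(ℓ ⬝ᵥ v)) 0
  have h₂ := hL (l + ℓ ⬝ᵥ p) (a - ℓ ⬝ᵥ v) b
  have h₃ := hL l a b
  simp only [dotProduct_add, dotProduct_smul, smul_eq_mul] at h₁ h₂ h₃ hxL ⊢
  have hprod : 2 * (ℓ ⬝ᵥ v) * (ℓ ⬝ᵥ p) ≠ 0 := by simp [hvℓ, hpℓ]
  replace h₁ := (h₁ (by ring)).resolve_left fun h => hprod (by linear_combination -h)
  rcases h₃ hxL with h | h
  · replace h₂ := (h₂ (by linear_combination hxL)).resolve_left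
      fun h' => hprod (by linear_combination h - h')
    linear_combination h₂ - h₁
  · exact h
end

section
/- Let F : U → ℝⁿ be continuous on a connected open set U ⊆ ℝ², and suppose F takes the intersection of U with every line from an open set of lines covering U into an affine line of ℝⁿ, and additionally that F is injective with image not contained in a line. Then F is locally the restriction of a projective embedding ℝP² → ℝPⁿ (Möbius–von Staudt type rigidity). -/
open Set

/-- A continuous real function that is additive near `0` is linear near `0`. -/
theorem exists_eq_mul_of_locally_additive {f : ℝ → ℝ} {δ : ℝ} (hδ : 0 < δ)
    (hf : ContinuousOn f (Ioo (-δ) δ))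
    (hadd : ∀ x y, |x| < δ / 2 → |y| < δ / 2 → f (x + y) = f x + f y) :
    ∃ c, ∀ x, |x| < δ / 2 → f x = c * x := by
  have hint : ∀ x y, |x| < δ → |y| < δ →
      IntervalIntegrable f MeasureTheory.volume x y := by
    intro x y hx hy
    apply ContinuousOn.intervalIntegrable
    apply hf.mono
    intro z hz
    exact ordConnected_Ioo.uIcc_subset (abs_lt.mp hx) (abs_lt.mp hy) hz
  have h0 : |(0 : ℝ)| < δ := by simpa using hδ
  have key : ∀ x y, |x| < δ / 2 → |y| < δ / 2 → y * f x =
      (∫ t in (0 : ℝ)..(x + y), f t) - (∫ t in (0 : ℝ)..x, f t) - ∫ t in (0 : ℝ)..y, f t := by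
    intro x y hx hy
    have hx' : |x| < δ := by linarith
    have hy' : |y| < δ := by linarith
    have hxy : |x + y| < δ := by linarith [abs_add_le x y]
    have e1 : (∫ t in (0 : ℝ)..y, f (x + t)) = ∫ t in x..(x + y), f t := by
      simp
    have e2 : (∫ t in (0 : ℝ)..y, f (x + t)) = ∫ t in (0 : ℝ)..y, (f x + f t) := by
      apply intervalIntegral.integral_congr
      intro t ht
      refine hadd x t hx ?_
      have h0' : (0 : ℝ) ∈ Ioo (-(δ / 2)) (δ / 2) := ⟨by linarith, by linarith⟩
      exact abs_lt.mpr (ordConnected_Ioo.uIcc_subset h0' (abs_lt.mp hy) ht)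
    rw [intervalIntegral.integral_add (by simp) (hint 0 y h0 hy')] at e2
    rw [intervalIntegral.integral_const] at e2
    have e3 := intervalIntegral.integral_add_adjacent_intervals (hint 0 x h0 hx')
      (hint x (x + y) hx' hxy)
    simp only [sub_zero, smul_eq_mul] at e2
    linarith
  have h4 : |δ / 4| < δ / 2 := by rw [abs_of_pos (by linarith)]; linarith
  refine ⟨f (δ / 4) / (δ / 4), fun x hx => ?_⟩
  have a1 := key x (δ / 4) hx h4
  have a2 := key (δ / 4) x h4 hx
  rw [add_comm (δ / 4) x] at a2
  have : δ / 4 * f x = x * f (δ / 4) := by linarith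
  field_simp
  linarith

/-- Two continuous injective real functions on `[-1, 1]` vanishing at `0` share a nonzero value. -/
theorem exists_common_value_ne_zero {f g : ℝ → ℝ} (hf : ContinuousOn f (Icc (-1) 1))
    (hg : ContinuousOn g (Icc (-1) 1)) (hfi : InjOn f (Icc (-1) 1)) (hgi : InjOn g (Icc (-1) 1))
    (hf0 : f 0 = 0) (hg0 : g 0 = 0) :
    ∃ σ ∈ Icc (-1 : ℝ) 1, ∃ τ ∈ Icc (-1 : ℝ) 1, f σ = g τ ∧ f σ ≠ 0 := by
  have hpos : ∀ h : ℝ → ℝ, ContinuousOn h (Icc (-1) 1) → InjOn h (Icc (-1) 1) → h 0 = 0 →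
      ∃ x ∈ Icc (-1 : ℝ) 1, 0 < h x := by
    intro h hc hi h0
    have m1 : (-1 : ℝ) ∈ Icc (-1 : ℝ) 1 := by simp
    have m0 : (0 : ℝ) ∈ Icc (-1 : ℝ) 1 := by simp
    have m2 : (1 : ℝ) ∈ Icc (-1 : ℝ) 1 := by simp
    rcases hc.strictMonoOn_of_injOn_Icc' (by norm_num) hi with hm | hm
    · exact ⟨1, m2, by simpa [h0] using hm m0 m2 one_pos⟩
    · exact ⟨-1, m1, by simpa [h0] using hm m1 m0 (by norm_num)⟩
  obtain ⟨x, hx, hfx⟩ := hpos f hf hfi hf0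
  obtain ⟨y, hy, hgy⟩ := hpos g hg hgi hg0
  have hm : 0 < min (f x) (g y) := lt_min hfx hgy
  have hival : ∀ h : ℝ → ℝ, ContinuousOn h (Icc (-1) 1) → h 0 = 0 → ∀ x ∈ Icc (-1 : ℝ) 1,
      ∀ e, 0 < e → e ≤ h x → ∃ σ ∈ Icc (-1 : ℝ) 1, h σ = e := by
    intro h hc h0 x hx e he hex
    have hsub : uIcc 0 x ⊆ Icc (-1 : ℝ) 1 := ordConnected_Icc.uIcc_subset (by simp) hx
    obtain ⟨σ, hσ, hσe⟩ := intermediate_value_uIcc (hc.mono hsub)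
      (show e ∈ uIcc (h 0) (h x) from by
        rw [h0]; exact Icc_subset_uIcc ⟨he.le, hex⟩)
    exact ⟨σ, hsub hσ, hσe⟩
  obtain ⟨σ, hσ, h1⟩ := hival f hf hf0 x hx _ hm (min_le_left _ _)
  obtain ⟨τ, hτ, h2⟩ := hival g hg hg0 y hy _ hm (min_le_right _ _)
  exact ⟨σ, hσ, τ, hτ, h1.trans h2.symm, by rw [h1]; exact hm.ne'⟩

/-- Projection from the point `(α, β)` of the line `X + Y = 1`, in the coordinates `(X, Y)` of the
plane: it is constant along the lines through that point. -/
theorem projection_from_infinity_eq {α β X Y X' Y' k : ℝ} (hαβ : α + β = 1)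
    (hX : X' = α + k * (X - α)) (hY : Y' = β + k * (Y - β))
    (hZ : 1 - X - Y ≠ 0) (hZ' : 1 - X' - Y' ≠ 0) :
    (β * X' - α * Y') / (1 - X' - Y') = (β * X - α * Y) / (1 - X - Y) := by
  obtain rfl : β = 1 - α := by linarith
  rw [div_eq_div_iff hZ' hZ, hX, hY]
  ring

section Box

variable {E : Type*} [NormedAddCommGroup E] [NormedSpace ℝ E]

/-- The open square of side `8` centred at the origin. -/
def box : Set (ℝ × ℝ) := {z | |z.1| < 4 ∧ |z.2| < 4}

/-- A continuous injective map on `box` sending points on a common line of slope less than `4` to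
collinear points. -/
structure IsBoxCollineation (G : ℝ × ℝ → E) : Prop where
  cont : ContinuousOn G box
  inj : InjOn G box
  line : ∀ x ∈ box, ∀ y ∈ box, ∀ z ∈ box, |y.2 - x.2| < 4 * |y.1 - x.1| →
    (z.2 - x.2) * (y.1 - x.1) = (y.2 - x.2) * (z.1 - x.1) →
    ∃ k : ℝ, G z = G x + k • (G y - G x)

/-- The point of the plane with projective coordinates `(u, v, 1)` with respect to the
points `(-1, -1)`, `(1, -1)` and the origin. -/
noncomputable def chart (u v : ℝ) : ℝ × ℝ := ((v - u) / (1 + u + v), -(u + v) / (1 + u + v))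

theorem chart_small {u v : ℝ} (hu : |u| < 1 / 10) (hv : |v| < 1 / 10) :
    |(chart u v).1| ≤ 1 / 2 ∧ |(chart u v).2| ≤ 1 / 2 := by
  rw [abs_lt] at hu hv
  have hD : 0 < 1 + u + v := by linarith [hu.1, hv.1]
  simp only [chart, abs_le]
  refine ⟨⟨?_, ?_⟩, ?_, ?_⟩
  · rw [le_div_iff₀ hD]; linarith [hu.1, hv.1, hu.2, hv.2]
  · rw [div_le_iff₀ hD]; linarith [hu.1, hv.1, hu.2, hv.2]
  · rw [le_div_iff₀ hD]; linarith [hu.1, hv.1, hu.2, hv.2]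
  · rw [div_le_iff₀ hD]; linarith [hu.1, hv.1, hu.2, hv.2]

theorem mem_box_of_small {z : ℝ × ℝ} (h : |z.1| ≤ 1 / 2 ∧ |z.2| ≤ 1 / 2) : z ∈ box :=
  ⟨by linarith [h.1], by linarith [h.2]⟩

theorem base_mem_box {b : ℝ} (hb : |b| ≤ 3) : (b, (-1 : ℝ)) ∈ box :=
  ⟨by simp only; linarith, by norm_num⟩

namespace IsBoxCollineation

variable {G : ℝ × ℝ → E}

theorem line_through_base (hG : IsBoxCollineation G) {b : ℝ} (hb1 : 1 ≤ |b|) (hb3 : |b| ≤ 3)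
    {z w : ℝ × ℝ} (hz : |z.1| ≤ 1 / 2 ∧ |z.2| ≤ 1 / 2) (hw : w ∈ box)
    (h : (w.2 + 1) * (z.1 - b) = (z.2 + 1) * (w.1 - b)) :
    ∃ k : ℝ, G w = G (b, -1) + k • (G z - G (b, -1)) := by
  apply hG.line _ (base_mem_box hb3) _ (mem_box_of_small hz) _ hw
  · have h1 : |z.2 - -1| ≤ 3 / 2 := by
      have := abs_sub z.2 (-1)
      simp only [abs_neg, abs_one] at this
      linarith [hz.2]
    have h2 : 1 / 2 ≤ |z.1 - b| := by
      have := abs_sub_abs_le_abs_sub b z.1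
      rw [abs_sub_comm] at this
      linarith [hz.1]
    simp only
    linarith
  · simp only
    linarith

theorem base_line (hG : IsBoxCollineation G) {w : ℝ} (hw : |w| ≤ 3) :
    ∃ k : ℝ, G (w, -1) = G (-1, -1) + k • (G (1, -1) - G (-1, -1)) := by
  apply hG.line _ (base_mem_box (by norm_num)) _ (base_mem_box (by norm_num)) _ (base_mem_box hw)
  · norm_num
  · norm_num

/-- A point near the origin is not mapped into the line containing the images of
`(-1, -1)` and `(1, -1)`. -/
theorem not_mem_base_line (hG : IsBoxCollineation G) {z : ℝ × ℝ}
    (hz : |z.1| ≤ 1 / 2 ∧ |z.2| ≤ 1 / 2) (k : ℝ) :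
    G z ≠ G (-1, -1) + k • (G (1, -1) - G (-1, -1)) := by
  intro hk
  set P := G (-1, -1) with hP
  set Q := G (1, -1) with hQ
  have hPQ : Q - P ≠ 0 := by
    intro h
    have := hG.inj (base_mem_box (by norm_num)) (base_mem_box (by norm_num)) (sub_eq_zero.mp h)
    norm_num at this
  obtain ⟨l, hl⟩ := SeparatingDual.exists_eq_one (R := ℝ) hPQ
  have hz1 := abs_le.mp hz.1
  have hz2 := abs_le.mp hz.2
  let d : Bool → ℝ × ℝ := fun i => if i then (z.1 + 1, z.2 + 1) else (2, 0)
  have hd : ∀ i, 0 < (d i).1 ∧ |(d i).1| ≤ 2 ∧ |(d i).2| ≤ 2 := by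
    intro i
    cases i
    · simp [d]
    · simp only [d, if_true, abs_le]
      refine ⟨?_, ⟨?_, ?_⟩, ?_, ?_⟩ <;> linarith
  let c : Bool → ℝ → ℝ × ℝ := fun i τ => (-1 + τ * (d i).1, -1 + τ * (d i).2)
  have hcm : ∀ i, ∀ τ ∈ Icc (-1 : ℝ) 1, c i τ ∈ box := by
    intro i τ hτ
    have ht : |τ| ≤ 1 := abs_le.mpr hτ
    have aux : ∀ e : ℝ, |e| ≤ 2 → |-1 + τ * e| < 4 := by
      intro e he
      have h1 : |τ * e| ≤ 2 := by
        rw [abs_mul]; nlinarith [abs_nonneg τ, abs_nonneg e]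
      have := abs_add_le (-1) (τ * e)
      simp only [abs_neg, abs_one] at this
      linarith
    exact ⟨aux _ (hd i).2.1, aux _ (hd i).2.2⟩
  have hval : ∀ i, ∀ τ ∈ Icc (-1 : ℝ) 1, G (c i τ) = P + l (G (c i τ) - P) • (Q - P) := by
    intro i τ hτ
    have : ∃ m : ℝ, G (c i τ) = P + m • (Q - P) := by
      cases i
      · have := hcm false τ hτ
        have h1 : c false τ = (-1 + τ * 2, -1) := by simp [c, d]
        rw [h1]
        apply hG.base_line
        rw [abs_le]; constructor <;> linarith [hτ.1, hτ.2]
      · obtain ⟨m, hm⟩ := hG.line_through_base (b := -1) (by norm_num) (by norm_num) hz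
          (hcm true τ hτ) (by simp only [c, d, if_true]; ring)
        refine ⟨m * k, ?_⟩
        rw [hm, hk, add_sub_cancel_left, smul_smul]
    obtain ⟨m, hm⟩ := this
    have h2 : l (G (c i τ) - P) = m := by
      rw [hm, add_sub_cancel_left, map_smul, hl]; simp
    rw [h2, ← hm]
  have hcinj : ∀ i, ∀ σ τ, c i σ = c i τ → σ = τ := by
    intro i σ τ h
    have h1 := congrArg Prod.fst h
    simp only [c] at h1
    exact mul_right_cancel₀ (hd i).1.ne' (by linarith)
  have hfc : ∀ i, ContinuousOn (fun τ => l (G (c i τ) - P)) (Icc (-1) 1) := by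
    intro i
    apply l.continuous.comp_continuousOn
    apply ContinuousOn.sub _ continuousOn_const
    exact hG.cont.comp (by fun_prop) (hcm i)
  have hfi : ∀ i, InjOn (fun τ => l (G (c i τ) - P)) (Icc (-1) 1) := by
    intro i σ hσ τ hτ h
    apply hcinj i
    apply hG.inj (hcm i σ hσ) (hcm i τ hτ)
    rw [hval i σ hσ, hval i τ hτ, show l (G (c i σ) - P) = l (G (c i τ) - P) from h]
  have hf0 : ∀ i, l (G (c i 0) - P) = 0 := by
    intro i
    simp [c, hP]
  obtain ⟨σ, hσ, τ, hτ, h1, h2⟩ := exists_common_value_ne_zero (hfc true) (hfc false) (hfi true)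
    (hfi false) (hf0 true) (hf0 false)
  have h3 : c true σ = c false τ := by
    apply hG.inj (hcm _ σ hσ) (hcm _ τ hτ)
    rw [hval _ σ hσ, hval _ τ hτ, h1]
  have h4 := congrArg Prod.snd h3
  simp only [c, d, if_true] at h4
  have h5 : σ = 0 := by
    have : σ * (z.2 + 1) = 0 := by simp at h4; simpa using h4
    rcases mul_eq_zero.mp this with h | h
    · exact h
    · linarith
  apply h2
  simp only [h5]
  exact hf0 true

/-- The images of the origin, `(-1, -1)` and `(1, -1)` are affinely independent. -/
theorem eq_zero_of_frame_combination (hG : IsBoxCollineation G) {x y : ℝ}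
    (h : x • (G (-1, -1) - G (0, 0)) + y • (G (1, -1) - G (0, 0)) = 0) : x = 0 ∧ y = 0 := by
  by_cases hxy : x + y = 0
  · obtain rfl : y = -x := by linarith
    have h1 : x • (G (-1, -1) - G (1, -1)) = 0 := by
      rw [← h]; module
    rcases smul_eq_zero.mp h1 with h2 | h2
    · simp [h2]
    · have := hG.inj (base_mem_box (by norm_num)) (base_mem_box (by norm_num)) (sub_eq_zero.mp h2)
      norm_num at this
  · exfalso
    apply hG.not_mem_base_line (z := (0, 0)) (by norm_num) (y / (x + y))
    have h1 : (x + y) • G (0, 0) = x • G (-1, -1) + y • G (1, -1) := by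
      rw [← sub_eq_zero, ← neg_eq_zero, ← h]; module
    apply smul_right_injective E hxy
    simp only
    rw [h1, smul_add, smul_smul, mul_div_cancel₀ _ hxy]
    module

/-- Near the origin the image lies in the plane through the images of the origin, `(-1, -1)`
and `(1, -1)`. -/
theorem exists_frame_coordinates (hG : IsBoxCollineation G) {u v : ℝ} (hu : |u| < 1 / 10)
    (hv : |v| < 1 / 10) :
    ∃ x y : ℝ, G (chart u v) =
      G (0, 0) + x • (G (-1, -1) - G (0, 0)) + y • (G (1, -1) - G (0, 0)) := by
  have hu' := abs_lt.mp hu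
  have hv' := abs_lt.mp hv
  have hD : 1 + u + v ≠ 0 := by linarith
  have hD' : 1 + v ≠ 0 := by linarith
  have h0 : |(0 : ℝ)| < 1 / 10 := by norm_num
  obtain ⟨k, hk⟩ := hG.line_through_base (b := 1) (z := (0, 0)) (w := chart 0 v) (by norm_num)
    (by norm_num) (by norm_num) (mem_box_of_small (chart_small h0 hv))
    (by simp only [chart, add_zero, zero_add, sub_zero]; field_simp; ring)
  obtain ⟨m, hm⟩ := hG.line_through_base (b := -1) (z := chart 0 v) (w := chart u v) (by norm_num)
    (by norm_num) (chart_small h0 hv) (mem_box_of_small (chart_small hu hv))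
    (by simp only [chart, add_zero, zero_add, sub_zero]; field_simp; ring)
  refine ⟨1 - m, m * (1 - k), ?_⟩
  rw [hm, hk]
  module

/-- Near the origin a box collineation is a projective map, written in the projective frames
given by the origin, `(-1, -1)`, `(1, -1)` and their images. -/
theorem exists_projective [FiniteDimensional ℝ E] (hG : IsBoxCollineation G) :
    ∃ c c' : ℝ, c ≠ 0 ∧ c' ≠ 0 ∧ ∀ s t : ℝ, |s| < 1 / 50 → |t| < 1 / 50 →
      (1 + t) + c * ((-t - s) / 2) + c' * ((s - t) / 2) ≠ 0 ∧
      ((1 + t) + c * ((-t - s) / 2) + c' * ((s - t) / 2)) • G (s, t) =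
        (1 + t) • G (0, 0) + (c * ((-t - s) / 2)) • G (-1, -1) +
          (c' * ((s - t) / 2)) • G (1, -1) := by
  let L : ℝ × ℝ →ₗ[ℝ] E := (LinearMap.toSpanSingleton ℝ E (G (-1, -1) - G (0, 0))).coprod
    (LinearMap.toSpanSingleton ℝ E (G (1, -1) - G (0, 0)))
  have hL : ∀ x y, L (x, y) = x • (G (-1, -1) - G (0, 0)) + y • (G (1, -1) - G (0, 0)) := by
    intro x y; simp [L]
  have hker : LinearMap.ker L = ⊥ := by
    rw [LinearMap.ker_eq_bot']
    rintro ⟨x, y⟩ h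
    rw [hL] at h
    obtain ⟨h1, h2⟩ := hG.eq_zero_of_frame_combination h
    simp [h1, h2]
  obtain ⟨p, hp⟩ := L.exists_leftInverse_of_injective hker
  have hpL : ∀ x, p (L x) = x := fun x => LinearMap.congr_fun hp x
  have hpc : Continuous p := p.continuous_of_finiteDimensional
  let X : ℝ × ℝ → ℝ := fun z => (p (G z - G (0, 0))).1
  let Y : ℝ × ℝ → ℝ := fun z => (p (G z - G (0, 0))).2
  have hcoord : ∀ z x y, G z =
      G (0, 0) + x • (G (-1, -1) - G (0, 0)) + y • (G (1, -1) - G (0, 0)) → X z = x ∧ Y z = y := by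
    intro z x y h
    have h1 : G z - G (0, 0) = L (x, y) := by rw [hL, h]; abel
    simp only [X, Y, h1, hpL, and_self]
  have hGXY : ∀ u v, |u| < 1 / 10 → |v| < 1 / 10 → G (chart u v) = G (0, 0) +
      X (chart u v) • (G (-1, -1) - G (0, 0)) + Y (chart u v) • (G (1, -1) - G (0, 0)) := by
    intro u v hu hv
    obtain ⟨x, y, h⟩ := hG.exists_frame_coordinates hu hv
    obtain ⟨h1, h2⟩ := hcoord _ _ _ h
    rw [h1, h2, h]
  have hZ : ∀ u v, |u| < 1 / 10 → |v| < 1 / 10 → 1 - X (chart u v) - Y (chart u v) ≠ 0 := by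
    intro u v hu hv h
    apply hG.not_mem_base_line (chart_small hu hv) (Y (chart u v))
    have h1 : X (chart u v) = 1 - Y (chart u v) := by linarith
    rw [hGXY u v hu hv, h1]
    module
  have hproj : ∀ u v u' v' b α β, |u| < 1 / 10 → |v| < 1 / 10 → |u'| < 1 / 10 → |v'| < 1 / 10 →
      1 ≤ |b| → |b| ≤ 3 → α + β = 1 → X (b, -1) = α → Y (b, -1) = β →
      ((chart u' v').2 + 1) * ((chart u v).1 - b) = ((chart u v).2 + 1) * ((chart u' v').1 - b) →
      (β * X (chart u' v') - α * Y (chart u' v')) / (1 - X (chart u' v') - Y (chart u' v')) =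
        (β * X (chart u v) - α * Y (chart u v)) / (1 - X (chart u v) - Y (chart u v)) := by
    intro u v u' v' b α β hu hv hu' hv' hb1 hb3 hαβ hX hY h
    obtain ⟨k, hk⟩ := hG.line_through_base hb1 hb3 (chart_small hu hv)
      (mem_box_of_small (chart_small hu' hv')) h
    have h1 : p (G (chart u' v') - G (0, 0)) = p (G (b, -1) - G (0, 0)) +
        k • (p (G (chart u v) - G (0, 0)) - p (G (b, -1) - G (0, 0))) := by
      rw [← map_sub, ← map_smul, ← map_add, hk]
      congr 1
      module
    refine projection_from_infinity_eq (k := k) hαβ ?_ ?_ (hZ u v hu hv) (hZ u' v' hu' hv')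
    · rw [← hX]; simp only [X, h1, Prod.fst_add, Prod.smul_fst, Prod.fst_sub, smul_eq_mul]
    · rw [← hY]; simp only [Y, h1, Prod.snd_add, Prod.smul_snd, Prod.snd_sub, smul_eq_mul]
  obtain ⟨m, hm⟩ := hG.base_line (w := 3) (by norm_num)
  have hm0 : m ≠ 0 := by
    rintro rfl
    have := hG.inj (base_mem_box (b := 3) (by norm_num)) (base_mem_box (b := -1) (by norm_num))
      (hm.trans (by rw [zero_smul, add_zero]))
    norm_num at this
  have hm1 : 1 - m ≠ 0 := by
    intro h
    obtain rfl : m = 1 := by linarith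
    have := hG.inj (base_mem_box (b := 3) (by norm_num)) (base_mem_box (b := 1) (by norm_num))
      (hm.trans (by rw [one_smul, add_sub_cancel]))
    norm_num at this
  have hP := hcoord (-1, -1) 1 0 (by module)
  have hQ := hcoord (1, -1) 0 1 (by module)
  have hR := hcoord (3, -1) (1 - m) m (by rw [hm]; module)
  have h00 : chart 0 0 = (0, 0) := by simp [chart]
  have hA := hcoord (chart 0 0) 0 0 (by rw [h00]; module)
  let Φ : ℝ → ℝ → ℝ := fun u v => X (chart u v) / (1 - X (chart u v) - Y (chart u v))
  let Ψ : ℝ → ℝ → ℝ := fun u v => Y (chart u v) / (1 - X (chart u v) - Y (chart u v))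
  have z0 : |(0 : ℝ)| < 1 / 10 := by norm_num
  have hden : ∀ u v : ℝ, |u| < 1 / 10 → |v| < 1 / 10 → 1 + u + v ≠ 0 := by
    intro u v hu hv
    have := (abs_lt.mp hu).1
    have := (abs_lt.mp hv).1
    linarith
  have hΦ : ∀ u v, |u| < 1 / 10 → |v| < 1 / 10 → Φ u v = Φ u 0 := by
    intro u v hu hv
    have h1 := hden u v hu hv
    have h2 := hden u 0 hu z0
    have := hproj u 0 u v 1 0 1 hu z0 hu hv (by norm_num) (by norm_num) (by norm_num) hQ.1 hQ.2
      (by simp only [chart]; field_simp; ring)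
    simpa [Φ] using this
  have hΨ : ∀ u v, |u| < 1 / 10 → |v| < 1 / 10 → Ψ u v = Ψ 0 v := by
    intro u v hu hv
    have h1 := hden u v hu hv
    have h2 := hden 0 v z0 hv
    have := hproj 0 v u v (-1) 1 0 z0 hv hu hv (by norm_num) (by norm_num) (by norm_num) hP.1 hP.2
      (by simp only [chart]; field_simp; ring)
    simpa [Ψ, neg_div] using this
  have hΦ0 : Φ 0 0 = 0 := by simp [Φ, hA.1]
  have hΨ0 : Ψ 0 0 = 0 := by simp [Ψ, hA.2]
  have hpex : ∀ u v, |u| < 1 / 10 → |v| < 1 / 10 → |u + v / 2| < 1 / 10 →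
      m * Φ u 0 - (1 - m) * Ψ 0 v = m * Φ (u + v / 2) 0 := by
    intro u v hu hv huv
    obtain ⟨w, hw⟩ : ∃ w, w = u + v / 2 := ⟨_, rfl⟩
    rw [← hw] at huv ⊢
    have h1 := hden u v hu hv
    have h2 := hden w 0 huv z0
    have h3 := hproj w 0 u v 3 (1 - m) m huv z0 hu hv (by norm_num) (by norm_num)
      (by ring) hR.1 hR.2 (by simp only [chart]; field_simp; rw [hw]; ring)
    have h4 := hΨ w 0 huv z0
    have h5 : ∀ z, (m * X z - (1 - m) * Y z) / (1 - X z - Y z) =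
        m * (X z / (1 - X z - Y z)) - (1 - m) * (Y z / (1 - X z - Y z)) := fun z => by ring
    rw [← hΦ u v hu hv, ← hΨ u v hu hv]
    rw [h5, h5] at h3
    change m * Φ u v - (1 - m) * Ψ u v =
      m * Φ w 0 - (1 - m) * Ψ w 0 at h3
    rw [h3, h4, hΨ0]
    ring
  have hcontΦ : ContinuousOn (fun u => Φ u 0) (Ioo (-(1 / 10)) (1 / 10)) := by
    have hc : ContinuousOn (fun u => p (G (chart u 0) - G (0, 0))) (Ioo (-(1 / 10)) (1 / 10)) := by
      apply hpc.comp_continuousOn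
      apply ContinuousOn.sub _ continuousOn_const
      apply hG.cont.comp
      · have : ∀ u ∈ Ioo (-(1 / 10) : ℝ) (1 / 10), 1 + u + 0 ≠ 0 :=
          fun u hu => hden u 0 (abs_lt.mpr hu) z0
        unfold chart
        fun_prop (disch := assumption)
      · exact fun u hu => mem_box_of_small (chart_small (abs_lt.mpr hu) z0)
    apply ContinuousOn.div
    · exact continuous_fst.comp_continuousOn hc
    · exact (continuousOn_const.sub (continuous_fst.comp_continuousOn hc)).sub
        (continuous_snd.comp_continuousOn hc)
    · exact fun u hu => hZ u 0 (abs_lt.mpr hu) z0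
  have hψ : ∀ y, |y| < 1 / 20 → -((1 - m) * Ψ 0 (2 * y)) = m * Φ y 0 := by
    intro y hy
    have := hpex 0 (2 * y) z0 (by rw [abs_mul, abs_two]; linarith)
      (by rw [zero_add, mul_div_cancel_left₀ _ two_ne_zero]; linarith)
    rw [zero_add, mul_div_cancel_left₀ _ two_ne_zero, hΦ0] at this
    linarith
  obtain ⟨c, hc⟩ := exists_eq_mul_of_locally_additive (f := fun u => Φ u 0) (δ := 1 / 10)
    (by norm_num) hcontΦ (by
      intro x y hx hy
      have hx' : |x| < 1 / 20 := by linarith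
      have hy' : |y| < 1 / 20 := by linarith
      have h1 := hpex x (2 * y) (by linarith) (by rw [abs_mul, abs_two]; linarith)
        (by rw [mul_div_cancel_left₀ _ two_ne_zero]; linarith [abs_add_le x y])
      rw [mul_div_cancel_left₀ _ two_ne_zero] at h1
      have h2 := hψ y hy'
      apply mul_left_cancel₀ hm0
      linarith)
  have hc1 : ∀ u, |u| < 1 / 20 → Φ u 0 = c * u := fun u hu => hc u (by linarith)
  have hc2 : ∀ v, |v| < 1 / 20 → Ψ 0 v = -(m * c / (2 * (1 - m))) * v := by
    intro v hv
    have hv2 : |v / 2| < 1 / 20 := by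
      rw [abs_div, abs_two]; linarith [abs_nonneg v]
    have := hψ (v / 2) hv2
    rw [hc1 _ hv2, mul_div_cancel₀ _ two_ne_zero] at this
    field_simp
    linarith
  have hc0 : c ≠ 0 := by
    rintro rfl
    have hs : |(1 / 40 : ℝ)| < 1 / 10 := by norm_num [abs_of_pos]
    have h1 := hc1 (1 / 40) (by norm_num [abs_of_pos])
    have h2 := hΨ (1 / 40) 0 hs z0
    rw [hΨ0] at h2
    rw [zero_mul] at h1
    have hz := hZ _ _ hs z0
    have h3 : X (chart (1 / 40) 0) = 0 := (div_eq_zero_iff.mp h1).resolve_right hz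
    have h4 : Y (chart (1 / 40) 0) = 0 := (div_eq_zero_iff.mp h2).resolve_right hz
    have h5 := hGXY _ _ hs z0
    rw [h3, h4, zero_smul, zero_smul, add_zero, add_zero] at h5
    have h6 := hG.inj (mem_box_of_small (chart_small hs z0)) (mem_box_of_small (by norm_num)) h5
    norm_num [chart] at h6
  obtain ⟨c', hc'⟩ : ∃ c', c' = -(m * c / (2 * (1 - m))) := ⟨_, rfl⟩
  rw [← hc'] at hc2
  have hc'0 : c' ≠ 0 := by
    rw [hc']
    exact neg_ne_zero.mpr (div_ne_zero (mul_ne_zero hm0 hc0) (mul_ne_zero two_ne_zero hm1))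
  refine ⟨c, c', hc0, hc'0, fun s t hs ht => ?_⟩
  have hs' := abs_lt.mp hs
  have ht' := abs_lt.mp ht
  have hT : 0 < 1 + t := by linarith
  obtain ⟨u, hu⟩ : ∃ u, u = (-t - s) / 2 / (1 + t) := ⟨_, rfl⟩
  obtain ⟨v, hv⟩ : ∃ v, v = (s - t) / 2 / (1 + t) := ⟨_, rfl⟩
  have hub : |u| < 1 / 20 := by
    rw [hu, abs_lt, lt_div_iff₀ hT, div_lt_iff₀ hT]; constructor <;> linarith
  have hvb : |v| < 1 / 20 := by
    rw [hv, abs_lt, lt_div_iff₀ hT, div_lt_iff₀ hT]; constructor <;> linarith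
  have hu1 : (-t - s) / 2 = (1 + t) * u := by rw [hu, mul_div_cancel₀ _ hT.ne']
  have hv1 : (s - t) / 2 = (1 + t) * v := by rw [hv, mul_div_cancel₀ _ hT.ne']
  have hub' : |u| < 1 / 10 := by linarith
  have hvb' : |v| < 1 / 10 := by linarith
  have hst : chart u v = (s, t) := by
    have h1 := hden u v hub' hvb'
    simp only [chart, Prod.mk.injEq]
    constructor
    · rw [div_eq_iff h1]
      apply mul_left_cancel₀ hT.ne'
      linear_combination hu1 - hv1 + s * (hu1 + hv1)
    · rw [div_eq_iff h1]
      linear_combination hu1 + hv1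
  have hz := hZ u v hub' hvb'
  have hΦuv := hΦ u v hub' hvb'
  have hΨuv := hΨ u v hub' hvb'
  rw [hc1 u hub, div_eq_iff hz] at hΦuv
  rw [hc2 v hvb, div_eq_iff hz] at hΨuv
  have hGz := hGXY u v hub' hvb'
  rw [hst] at hz hΦuv hΨuv hGz
  obtain ⟨Z, hZdef⟩ : ∃ Z, Z = 1 - X (s, t) - Y (s, t) := ⟨_, rfl⟩
  rw [← hZdef] at hz hΦuv hΨuv
  have hW : (1 + c * u + c' * v) * Z = 1 := by linarith
  have hW0 : 1 + c * u + c' * v ≠ 0 := left_ne_zero_of_mul_eq_one hW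
  have hD : (1 + t) + c * ((-t - s) / 2) + c' * ((s - t) / 2) =
      (1 + t) * (1 + c * u + c' * v) := by
    rw [hu1, hv1]; ring
  rw [hD]
  refine ⟨mul_ne_zero hT.ne' hW0, ?_⟩
  have hGz' : G (s, t) = Z • (G (0, 0) + (c * u) • G (-1, -1) + (c' * v) • G (1, -1)) := by
    have : (1 : ℝ) = Z + c * u * Z + c' * v * Z := by linarith
    calc G (s, t) = (1 : ℝ) • G (0, 0) + X (s, t) • (G (-1, -1) - G (0, 0)) +
          Y (s, t) • (G (1, -1) - G (0, 0)) := by rw [one_smul]; exact hGz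
      _ = _ := by rw [hΦuv, hΨuv, this]; module
  rw [hGz', smul_smul, mul_assoc, hW, mul_one, hu1, hv1]
  module

end IsBoxCollineation

end Box

/-- The linear map sending the projective coordinates of a point of the plane to those of its image,
for a projective map with prescribed frame. -/
theorem exists_injective_linearMap_of_frame {n : ℕ} {A P Q : Fin n → ℝ}
    (hind : ∀ x y : ℝ, x • (P - A) + y • (Q - A) = 0 → x = 0 ∧ y = 0)
    (w₀ w₁ w₂ : (Fin 3 → ℝ) →ₗ[ℝ] ℝ)
    (hw : ∀ y, w₀ y = 0 → w₁ y = 0 → w₂ y = 0 → y = 0) :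
    ∃ T : (Fin 3 → ℝ) →ₗ[ℝ] (Fin (n + 1) → ℝ), Function.Injective T ∧
      ∀ y, T y (Fin.last n) = w₀ y + w₁ y + w₂ y ∧
        ∀ i : Fin n, T y i.castSucc = (w₀ y • A + w₁ y • P + w₂ y • Q) i := by
  let T : (Fin 3 → ℝ) →ₗ[ℝ] (Fin (n + 1) → ℝ) :=
    { toFun := fun y => Fin.snoc (α := fun _ => ℝ) (w₀ y • A + w₁ y • P + w₂ y • Q)
        (w₀ y + w₁ y + w₂ y)
      map_add' := by
        intro y z
        ext i
        refine Fin.lastCases ?_ (fun j => ?_) i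
        · simp only [Fin.snoc_last, Pi.add_apply, map_add]; ring
        · simp only [Fin.snoc_castSucc, Pi.add_apply, map_add, Pi.smul_apply, smul_eq_mul]; ring
      map_smul' := by
        intro r y
        ext i
        refine Fin.lastCases ?_ (fun j => ?_) i
        · simp only [Fin.snoc_last, Pi.smul_apply, map_smul, RingHom.id_apply, smul_eq_mul]; ring
        · simp only [Fin.snoc_castSucc, Pi.add_apply, map_smul, Pi.smul_apply, smul_eq_mul,
            RingHom.id_apply]
          ring }
  have hlast : ∀ y, T y (Fin.last n) = w₀ y + w₁ y + w₂ y := fun y => by simp [T]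
  have hcast : ∀ y (i : Fin n), T y i.castSucc = (w₀ y • A + w₁ y • P + w₂ y • Q) i :=
    fun y i => by simp [T]
  refine ⟨T, ?_, fun y => ⟨hlast y, hcast y⟩⟩
  rw [injective_iff_map_eq_zero]
  intro y hy
  have h1 : w₀ y + w₁ y + w₂ y = 0 := by rw [← hlast, hy]; rfl
  have h2 : w₀ y • A + w₁ y • P + w₂ y • Q = 0 := by
    ext i
    rw [← hcast, hy]; rfl
  have h3 : w₀ y = -w₁ y - w₂ y := by linarith
  obtain ⟨h4, h5⟩ := hind (w₁ y) (w₂ y) (by rw [← h2, h3]; module)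
  exact hw y (by rw [h3, h4, h5]; ring) h4 h5

/-- In suitable affine coordinates centred at a given point, a continuous injective map sending
an open set of lines into lines is a box collineation. -/
theorem exists_isBoxCollineation {n : ℕ} {U : Set (Fin 2 → ℝ)} (hU : IsOpen U)
    {F : (Fin 2 → ℝ) → (Fin n → ℝ)} (hcont : ContinuousOn F U)
    {W : Set ((Fin 2 → ℝ) × (Fin 2 → ℝ))} (hW : IsOpen W)
    (hlines : ∀ aξ ∈ W, ∃ (p v : Fin n → ℝ), ∀ t : ℝ,
      aξ.1 + t • aξ.2 ∈ U → ∃ s : ℝ, F (aξ.1 + t • aξ.2) = p + s • v)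
    (hinj : Set.InjOn F U) {a ξ : Fin 2 → ℝ} (ha : a ∈ U) (haW : (a, ξ) ∈ W) (hξ : ξ ≠ 0) :
    ∃ k l : ℝ, k ≠ 0 ∧ l ≠ 0 ∧
      (∀ z ∈ box, a + (k * z.1) • ξ + (l * z.2) • ![-ξ 1, ξ 0] ∈ U) ∧
      IsBoxCollineation fun z : ℝ × ℝ => F (a + (k * z.1) • ξ + (l * z.2) • ![-ξ 1, ξ 0]) := by
  obtain ⟨η, hη⟩ : ∃ η : Fin 2 → ℝ, η = ![-ξ 1, ξ 0] := ⟨_, rfl⟩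
  rw [← hη]
  obtain ⟨ε₁, hε₁, hb₁⟩ := Metric.isOpen_iff.mp hW _ haW
  obtain ⟨ε₂, hε₂, hb₂⟩ := Metric.isOpen_iff.mp hU _ ha
  obtain ⟨ε, hε, hεW, hεU⟩ : ∃ ε > 0, (∀ x ζ, ‖x - a‖ < ε → ‖ζ - ξ‖ < ε → (x, ζ) ∈ W) ∧
      ∀ x, ‖x - a‖ < ε → x ∈ U := by
    refine ⟨min ε₁ ε₂, lt_min hε₁ hε₂, fun x ζ hx hζ => hb₁ ?_, fun x hx => hb₂ ?_⟩
    · rw [Metric.mem_ball, Prod.dist_eq, dist_eq_norm, dist_eq_norm]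
      exact max_lt (hx.trans_le (min_le_left _ _)) (hζ.trans_le (min_le_left _ _))
    · rw [Metric.mem_ball, dist_eq_norm]
      exact hx.trans_le (min_le_right _ _)
  have hM : 0 < ‖ξ‖ := norm_pos_iff.mpr hξ
  have hηM : ‖η‖ ≤ ‖ξ‖ := by
    rw [pi_norm_le_iff_of_nonneg hM.le, hη]
    intro i
    fin_cases i
    · simpa using norm_le_pi_norm ξ 1
    · simpa using norm_le_pi_norm ξ 0
  obtain ⟨k, hk0, hk⟩ : ∃ k : ℝ, 0 < k ∧ k * (4 * ‖ξ‖) = ε / 4 :=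
    ⟨ε / (16 * ‖ξ‖), by positivity, by field_simp; norm_num⟩
  obtain ⟨θ, hθ0, hθ1, hθ⟩ : ∃ θ : ℝ, 0 < θ ∧ θ ≤ 1 ∧ θ * (4 * ‖ξ‖) ≤ ε / 2 := by
    refine ⟨min 1 (ε / (8 * ‖ξ‖)), by positivity, min_le_left _ _, ?_⟩
    calc _ ≤ ε / (8 * ‖ξ‖) * (4 * ‖ξ‖) := by gcongr; exact min_le_right _ _
      _ = ε / 2 := by field_simp; norm_num
  have hpt : ∀ z ∈ box, ‖a + (k * z.1) • ξ + (k * θ * z.2) • η - a‖ < ε := by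
    intro z hz
    have e : a + (k * z.1) • ξ + (k * θ * z.2) • η - a = (k * z.1) • ξ + (k * θ * z.2) • η := by
      abel
    rw [e]
    have h1 : ‖(k * z.1) • ξ‖ ≤ ε / 4 := by
      rw [norm_smul, norm_mul, Real.norm_eq_abs, Real.norm_eq_abs, abs_of_pos hk0, ← hk, mul_assoc]
      gcongr
      exact hz.1.le
    have h2 : ‖(k * θ * z.2) • η‖ ≤ ε / 4 := by
      rw [norm_smul, norm_mul, norm_mul, Real.norm_eq_abs, Real.norm_eq_abs, Real.norm_eq_abs,
        abs_of_pos hk0, abs_of_pos hθ0]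
      calc k * θ * |z.2| * ‖η‖ ≤ k * 1 * 4 * ‖ξ‖ := by
            gcongr
            exact hz.2.le
        _ = ε / 4 := by rw [← hk]; ring
    linarith [norm_add_le ((k * z.1) • ξ) ((k * θ * z.2) • η)]
  have hN : 0 < ξ 0 ^ 2 + ξ 1 ^ 2 := by
    by_contra h
    apply hξ
    have h0 : ξ 0 = 0 := by nlinarith [sq_nonneg (ξ 0), sq_nonneg (ξ 1)]
    have h1 : ξ 1 = 0 := by nlinarith [sq_nonneg (ξ 0), sq_nonneg (ξ 1)]
    ext i
    fin_cases i
    · exact h0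
    · exact h1
  have hptinj : ∀ z w : ℝ × ℝ, a + (k * z.1) • ξ + (k * θ * z.2) • η =
      a + (k * w.1) • ξ + (k * θ * w.2) • η → z = w := by
    intro z w h
    have h0 := congrFun h 0
    have h1 := congrFun h 1
    simp only [hη, Pi.add_apply, Pi.smul_apply, smul_eq_mul, Matrix.cons_val_zero,
      Matrix.cons_val_one] at h0 h1
    have e1 : (k * (ξ 0 ^ 2 + ξ 1 ^ 2)) * z.1 = (k * (ξ 0 ^ 2 + ξ 1 ^ 2)) * w.1 := by
      linear_combination ξ 0 * h0 + ξ 1 * h1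
    have e2 : (k * θ * (ξ 0 ^ 2 + ξ 1 ^ 2)) * z.2 = (k * θ * (ξ 0 ^ 2 + ξ 1 ^ 2)) * w.2 := by
      linear_combination -ξ 1 * h0 + ξ 0 * h1
    exact Prod.ext (mul_left_cancel₀ (by positivity) e1) (mul_left_cancel₀ (by positivity) e2)
  refine ⟨k, k * θ, hk0.ne', by positivity, fun z hz => hεU _ (hpt z hz), ?_, ?_, ?_⟩
  · exact hcont.comp (by fun_prop) fun z hz => hεU _ (hpt z hz)
  · intro z hz w hw h
    exact hptinj z w (hinj (hεU _ (hpt z hz)) (hεU _ (hpt w hw)) h)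
  · intro x hx y hy z hz hslope hcol
    have hd : y.1 - x.1 ≠ 0 := by
      intro h
      rw [h, abs_zero, mul_zero] at hslope
      exact absurd hslope (abs_nonneg _).not_gt
    obtain ⟨m, hm⟩ : ∃ m, m = (y.2 - x.2) / (y.1 - x.1) := ⟨_, rfl⟩
    have hm4 : |m| ≤ 4 := by
      rw [hm, abs_div, div_le_iff₀ (abs_pos.mpr hd)]
      exact hslope.le
    have hW' : (a + (k * x.1) • ξ + (k * θ * x.2) • η, ξ + (m * θ) • η) ∈ W := by
      apply hεW _ _ (hpt x hx)
      rw [add_sub_cancel_left, norm_smul, norm_mul, Real.norm_eq_abs, Real.norm_eq_abs,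
        abs_of_pos hθ0]
      calc |m| * θ * ‖η‖ ≤ 4 * θ * ‖ξ‖ := by gcongr
        _ = θ * (4 * ‖ξ‖) := by ring
        _ < ε := by linarith
    obtain ⟨p, v, hpv⟩ := hlines _ hW'
    have hform : ∀ w : ℝ × ℝ, w.2 - x.2 = m * (w.1 - x.1) →
        a + (k * w.1) • ξ + (k * θ * w.2) • η = a + (k * x.1) • ξ + (k * θ * x.2) • η +
          (k * (w.1 - x.1)) • (ξ + (m * θ) • η) := by
      intro w hw
      have : w.2 = x.2 + m * (w.1 - x.1) := by linarith
      rw [this]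
      module
    have hval : ∀ w ∈ box, w.2 - x.2 = m * (w.1 - x.1) →
        ∃ s : ℝ, F (a + (k * w.1) • ξ + (k * θ * w.2) • η) = p + s • v := by
      intro w hwb hw
      have := hpv (k * (w.1 - x.1))
      simp only at this
      rw [← hform w hw] at this
      exact this (hεU _ (hpt w hwb))
    obtain ⟨s₀, h₀⟩ := hval x hx (by ring)
    obtain ⟨s₁, h₁⟩ := hval y hy (by rw [hm]; field_simp)
    obtain ⟨s₂, h₂⟩ := hval z hz (by rw [hm]; field_simp; linarith)
    have hs : s₁ - s₀ ≠ 0 := by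
      intro h
      apply hd
      have : s₁ = s₀ := by linarith
      rw [this, ← h₀] at h₁
      rw [hptinj y x (hinj (hεU _ (hpt y hy)) (hεU _ (hpt x hx)) h₁), sub_self]
    refine ⟨(s₂ - s₀) / (s₁ - s₀), ?_⟩
    simp only [h₀, h₁, h₂]
    have e : p + s₁ • v - (p + s₀ • v) = (s₁ - s₀) • v := by module
    rw [e, smul_smul, div_mul_cancel₀ _ hs]
    module

/-- Möbius–von Staudt rigidity: a continuous injective map `F : U → ℝⁿ` on a
connected open `U ⊆ ℝ²`, taking the intersection of `U` with every line from an
open set of lines covering `U` into an affine line, and whose image is not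
contained in a line, is locally the restriction of a projective embedding
`ℝP² → ℝPⁿ` (induced by an injective linear map `ℝ³ → ℝ^{n+1}`, with `U` and
`ℝⁿ` viewed in affine charts). -/
theorem stmt_18 (n : ℕ) (U : Set (Fin 2 → ℝ)) (hU : IsOpen U)
    (hUconn : IsConnected U)
    (F : (Fin 2 → ℝ) → (Fin n → ℝ)) (hcont : ContinuousOn F U)
    (W : Set ((Fin 2 → ℝ) × (Fin 2 → ℝ))) (hW : IsOpen W)
    (hWne : ∀ aξ ∈ W, aξ.2 ≠ 0)
    (hcover : ∀ a ∈ U, ∃ ξ : Fin 2 → ℝ, (a, ξ) ∈ W)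
    (hlines : ∀ aξ ∈ W, ∃ (p v : Fin n → ℝ), ∀ t : ℝ,
      aξ.1 + t • aξ.2 ∈ U → ∃ s : ℝ, F (aξ.1 + t • aξ.2) = p + s • v)
    (hinj : Set.InjOn F U)
    (hnl : ¬∃ (p v : Fin n → ℝ), ∀ x ∈ U, ∃ t : ℝ, F x = p + t • v) :
    ∀ a ∈ U, ∃ V : Set (Fin 2 → ℝ), IsOpen V ∧ a ∈ V ∧ V ⊆ U ∧
      ∃ T : (Fin 3 → ℝ) →ₗ[ℝ] (Fin (n + 1) → ℝ),
        Function.Injective T ∧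
        ∀ x ∈ V,
          T (Fin.snoc x 1) (Fin.last n) ≠ 0 ∧
          ∀ i : Fin n,
            F x i = T (Fin.snoc x 1) i.castSucc / T (Fin.snoc x 1) (Fin.last n) := by
  intro a ha
  obtain ⟨ξ, haW⟩ := hcover a ha
  have hξ : ξ ≠ 0 := hWne _ haW
  obtain ⟨k, l, hk, hl, hbox, hG⟩ := exists_isBoxCollineation hU hcont hW hlines hinj ha haW hξ
  have hN : ξ 0 ^ 2 + ξ 1 ^ 2 ≠ 0 := by
    intro h
    apply hξ
    have h0 : ξ 0 = 0 := by nlinarith [sq_nonneg (ξ 0), sq_nonneg (ξ 1)]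
    have h1 : ξ 1 = 0 := by nlinarith [sq_nonneg (ξ 0), sq_nonneg (ξ 1)]
    ext i
    fin_cases i
    · exact h0
    · exact h1
  obtain ⟨c, c', hc, hc', hproj⟩ := hG.exists_projective
  let pr : Fin 3 → (Fin 3 → ℝ) →ₗ[ℝ] ℝ := fun i => LinearMap.proj i
  let x₀ := pr 0 - a 0 • pr 2
  let x₁ := pr 1 - a 1 • pr 2
  let σ := (k * (ξ 0 ^ 2 + ξ 1 ^ 2))⁻¹ • (ξ 0 • x₀ + ξ 1 • x₁)
  let τ := (l * (ξ 0 ^ 2 + ξ 1 ^ 2))⁻¹ • (ξ 0 • x₁ - ξ 1 • x₀)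
  have hσ : ∀ y, k * (ξ 0 ^ 2 + ξ 1 ^ 2) * σ y =
      ξ 0 * (y 0 - a 0 * y 2) + ξ 1 * (y 1 - a 1 * y 2) := by
    intro y
    simp only [σ, x₀, x₁, pr, LinearMap.smul_apply, LinearMap.add_apply, LinearMap.sub_apply,
      LinearMap.proj_apply, smul_eq_mul]
    field_simp
  have hτ : ∀ y, l * (ξ 0 ^ 2 + ξ 1 ^ 2) * τ y =
      ξ 0 * (y 1 - a 1 * y 2) - ξ 1 * (y 0 - a 0 * y 2) := by
    intro y
    simp only [τ, x₀, x₁, pr, LinearMap.smul_apply, LinearMap.sub_apply,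
      LinearMap.proj_apply, smul_eq_mul]
    field_simp
  have h_coord0 : ∀ y, y 0 - a 0 * y 2 = k * σ y * ξ 0 - l * τ y * ξ 1 := by
    intro y
    apply mul_left_cancel₀ hN
    linear_combination -ξ 0 * hσ y + ξ 1 * hτ y
  have h_coord1 : ∀ y, y 1 - a 1 * y 2 = k * σ y * ξ 1 + l * τ y * ξ 0 := by
    intro y
    apply mul_left_cancel₀ hN
    linear_combination -ξ 1 * hσ y - ξ 0 * hτ y
  obtain ⟨T, hTinj, hT⟩ := exists_injective_linearMap_of_frame
    (fun x y h => hG.eq_zero_of_frame_combination h)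
    (pr 2 + τ) (c • (2⁻¹ : ℝ) • (-τ - σ)) (c' • (2⁻¹ : ℝ) • (σ - τ)) (by
      intro y h0 h1 h2
      simp only [LinearMap.smul_apply, LinearMap.add_apply, LinearMap.sub_apply,
        LinearMap.neg_apply, smul_eq_mul, mul_eq_zero, hc, hc', inv_eq_zero, two_ne_zero,
        false_or, pr, LinearMap.proj_apply] at h0 h1 h2
      have hs0 : σ y = 0 := by linarith
      have ht0 : τ y = 0 := by linarith
      have hy2 : y 2 = 0 := by linarith
      have e0 := h_coord0 y
      have e1 := h_coord1 y
      rw [hs0, ht0, hy2] at e0 e1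
      ext i
      fin_cases i
      · simpa using e0
      · simpa using e1
      · exact hy2)
  let ι : (Fin 2 → ℝ) → Fin 3 → ℝ := fun x => Fin.snoc (α := fun _ => ℝ) x 1
  have hι : Continuous ι := by
    apply continuous_pi
    intro i
    fin_cases i
    · exact continuous_apply 0
    · exact continuous_apply 1
    · exact continuous_const
  have hσc : Continuous fun x => σ (ι x) := σ.continuous_of_finiteDimensional.comp hι
  have hτc : Continuous fun x => τ (ι x) := τ.continuous_of_finiteDimensional.comp hι
  have hx : ∀ x, x = a + (k * σ (ι x)) • ξ + (l * τ (ι x)) • ![-ξ 1, ξ 0] := by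
    intro x
    have e0 := h_coord0 (ι x)
    have e1 := h_coord1 (ι x)
    have i0 : ι x 0 = x 0 := rfl
    have i1 : ι x 1 = x 1 := rfl
    have i2 : ι x 2 = 1 := rfl
    rw [i0, i2] at e0
    rw [i1, i2] at e1
    ext i
    fin_cases i
    · simp
      linarith
    · simp
      linarith
  have hιa0 : ι a 0 - a 0 * ι a 2 = 0 := by
    change a 0 - a 0 * 1 = 0
    ring
  have hιa1 : ι a 1 - a 1 * ι a 2 = 0 := by
    change a 1 - a 1 * 1 = 0
    ring
  have hσa : σ (ι a) = 0 := by
    apply mul_left_cancel₀ (mul_ne_zero hk hN)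
    rw [hσ, hιa0, hιa1]
    ring
  have hτa : τ (ι a) = 0 := by
    apply mul_left_cancel₀ (mul_ne_zero hl hN)
    rw [hτ, hιa0, hιa1]
    ring
  refine ⟨{x | |σ (ι x)| < 1 / 50 ∧ |τ (ι x)| < 1 / 50}, ?_, ?_, ?_, T, hTinj, ?_⟩
  · exact (isOpen_lt hσc.abs continuous_const).inter (isOpen_lt hτc.abs continuous_const)
  · simp only [Set.mem_ofPred_eq, hσa, hτa]
    norm_num
  · rintro x ⟨h1, h2⟩
    rw [hx x]
    exact hbox (σ (ι x), τ (ι x)) ⟨by simp only; linarith, by simp only; linarith⟩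
  · rintro x ⟨h1, h2⟩
    obtain ⟨hD, hGx⟩ := hproj _ _ h1 h2
    simp only [← hx x] at hGx
    obtain ⟨hlast, hcast⟩ := hT (ι x)
    change T (ι x) (Fin.last n) ≠ 0 ∧
      ∀ i : Fin n, F x i = T (ι x) i.castSucc / T (ι x) (Fin.last n)
    have i2 : ι x 2 = 1 := rfl
    simp only [LinearMap.smul_apply, LinearMap.add_apply, LinearMap.sub_apply,
      LinearMap.neg_apply, smul_eq_mul, pr, LinearMap.proj_apply, i2, inv_mul_eq_div]
      at hlast hcast
    rw [hlast]
    refine ⟨hD, fun i => ?_⟩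
    rw [hcast, eq_div_iff hD, ← hGx, Pi.smul_apply, smul_eq_mul, mul_comm]
end
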